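/- arXiv:1509.02303 — 4 statements merged into one kernel-verified Lean document; each statement's English description precedes it below -/
import Mathlib

section
/- For any finite set Γ ⊂ ℤ² and any state φ : Γ → ℤ≥0, every sequence of legal topplings starting from φ terminates after finitely many steps in a stable state, and this final stable state is the same for every relaxation of φ (it depends only on φ, not on the order in which legal topplings are applied). -/
open Filter
open scoped Pointwise Topology

/-! ## The abelian sandpile model on a finite subset `Γ` of `ℤ²` -/

/-- Lattice sites. -/
abbrev V : Type := ℤ × ℤ

/-- The four lattice neighbours of `v`. -/
def nbrs (v : V) : Finset V :=
  {(v.1 + 1, v.2), (v.1 - 1, v.2), (v.1, v.2 + 1), (v.1, v.2 - 1)}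

/-- A sandpile state on `Γ`: a nonnegative integer valued function, regarded as a
function on all of `ℤ²` vanishing outside `Γ`. -/
def IsState (Γ : Set V) (φ : V → ℤ) : Prop :=
  (∀ v, 0 ≤ φ v) ∧ ∀ v ∉ Γ, φ v = 0

open Classical in
/-- The toppling operator at `v ∈ Γ`: `T_v φ = φ - 4δ_v + ∑_{w ∈ n(v) ∩ Γ} δ_w`. -/
noncomputable def toppleAt (Γ : Set V) (v : V) (φ : V → ℤ) : V → ℤ :=
  fun w => φ w - (if w = v then 4 else 0) + (if w ∈ nbrs v ∧ w ∈ Γ then 1 else 0)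

/-- A state is stable if it is at most `3` everywhere on `Γ`. -/
def StableState (Γ : Set V) (φ : V → ℤ) : Prop := ∀ v ∈ Γ, φ v ≤ 3

/-- One legal toppling step: topple some `v ∈ Γ` with `φ v ≥ 4`. -/
def LegalStep (Γ : Set V) (φ ψ : V → ℤ) : Prop :=
  ∃ v ∈ Γ, 4 ≤ φ v ∧ ψ = toppleAt Γ v φ

/-- `ρ 0, ρ 1, …, ρ m` is a relaxation of `φ`: a sequence of legal topplings
ending in a stable state. -/
def IsRelaxation (Γ : Set V) (φ : V → ℤ) (m : ℕ) (ρ : ℕ → V → ℤ) : Prop :=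
  ρ 0 = φ ∧ (∀ i < m, LegalStep Γ (ρ i) (ρ (i + 1))) ∧ StableState Γ (ρ m)

/-- `ψ` is the result of some relaxation of `φ`. -/
def Relaxes (Γ : Set V) (φ ψ : V → ℤ) : Prop :=
  ∃ m ρ, IsRelaxation Γ φ m ρ ∧ ρ m = ψ

lemma isState_step {Γ : Set V} {φ ψ : V → ℤ} (h : IsState Γ φ) (hs : LegalStep Γ φ ψ) :
    IsState Γ ψ := by
  obtain ⟨v, hv, h4, rfl⟩ := hs
  refine ⟨fun w => ?_, fun w hw => ?_⟩
  · have := h.1 w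
    unfold toppleAt
    by_cases hwv : w = v
    · subst hwv
      split_ifs <;> simp_all <;> omega
    · split_ifs <;> simp_all <;> omega
  · have := h.2 w hw
    have hne : w ≠ v := fun e => hw (e ▸ hv)
    simp [toppleAt, hw, hne, this]

lemma exists_weight {Γ : Set V} (hΓ : Γ.Finite) : ∃ C : ℤ, ∀ v ∈ Γ,
    0 ≤ C - v.1 ^ 2 ∧ ∀ w ∈ nbrs v, 0 ≤ C - w.1 ^ 2 := by
  obtain ⟨B, hB⟩ := (hΓ.image (fun v : V => |v.1|)).bddAbove
  refine ⟨(B + 1) ^ 2, fun v hv => ?_⟩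
  have h1 : |v.1| ≤ B := hB ⟨v, hv, rfl⟩
  have h2 := abs_le.1 h1
  refine ⟨by nlinarith, fun w hw => ?_⟩
  have h3 : -(B + 1) ≤ w.1 ∧ w.1 ≤ B + 1 := by
    simp only [nbrs, Finset.mem_insert, Finset.mem_singleton] at hw
    rcases hw with rfl | rfl | rfl | rfl <;> constructor <;> simp <;> omega
  nlinarith

lemma weight_drop (S : Finset V) (C : ℤ) (v : V) (hv : v ∈ S)
    (hC : ∀ w ∈ nbrs v, 0 ≤ C - w.1 ^ 2) (φ : V → ℤ) :
    ∑ w ∈ S, toppleAt (S : Set V) v φ w * (C - w.1 ^ 2) + 1 ≤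
      ∑ w ∈ S, φ w * (C - w.1 ^ 2) := by
  classical
  have e1 : ∀ w ∈ S, toppleAt (S : Set V) v φ w * (C - w.1 ^ 2) =
      φ w * (C - w.1 ^ 2) - (if w = v then 4 * (C - w.1 ^ 2) else 0) +
        (if w ∈ nbrs v then (C - w.1 ^ 2) else 0) := by
    intro w hw
    simp only [toppleAt, Finset.mem_coe, hw, and_true]
    split_ifs <;> ring
  rw [Finset.sum_congr rfl e1, Finset.sum_add_distrib, Finset.sum_sub_distrib,
    Finset.sum_ite_eq' S v, if_pos hv, ← Finset.sum_filter]
  have h1 : ∑ w ∈ S with w ∈ nbrs v, (C - w.1 ^ 2) ≤ ∑ w ∈ nbrs v, (C - w.1 ^ 2) :=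
    Finset.sum_le_sum_of_subset_of_nonneg
      (fun w hw => (Finset.mem_filter.1 hw).2) (fun w hw _ => hC w hw)
  have h2 : ∑ w ∈ nbrs v, (C - w.1 ^ 2) = 4 * (C - v.1 ^ 2) - 2 := by
    unfold nbrs
    rw [Finset.sum_insert, Finset.sum_insert, Finset.sum_insert, Finset.sum_singleton]
    · ring
    all_goals
      simp only [Finset.mem_insert, Finset.mem_singleton, Prod.mk.injEq]
      omega
  linarith

lemma no_infinite {Γ : Set V} (hΓ : Γ.Finite) {φ : V → ℤ} (hφ : IsState Γ φ) :
    ¬ ∃ ρ : ℕ → V → ℤ, ρ 0 = φ ∧ ∀ i : ℕ, LegalStep Γ (ρ i) (ρ (i + 1)) := by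
  rintro ⟨ρ, h0, hρ⟩
  obtain ⟨C, hC⟩ := exists_weight hΓ
  lift Γ to Finset V using hΓ
  have key : ∀ i : ℕ, IsState (Γ : Set V) (ρ i) ∧
      ∑ w ∈ Γ, ρ i w * (C - w.1 ^ 2) + i ≤ ∑ w ∈ Γ, φ w * (C - w.1 ^ 2) := by
    intro i
    induction i with
    | zero => subst h0; exact ⟨hφ, by simp⟩
    | succ i ih =>
      refine ⟨isState_step ih.1 (hρ i), ?_⟩
      obtain ⟨v, hv, -, e⟩ := hρ i
      have := weight_drop Γ C v hv (hC v hv).2 (ρ i)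
      rw [e]
      push_cast
      linarith [ih.2]
  have hk := key ((∑ w ∈ Γ, φ w * (C - w.1 ^ 2)).toNat + 1)
  have hnn := Finset.sum_nonneg (s := Γ) (fun w hw => mul_nonneg (hk.1.1 w) (hC w hw).1)
  have h2 := hk.2
  push_cast at h2
  omega

lemma topple_comm (Γ : Set V) (v w : V) (φ : V → ℤ) :
    toppleAt Γ v (toppleAt Γ w φ) = toppleAt Γ w (toppleAt Γ v φ) := by
  funext x
  simp only [toppleAt]
  ring

lemma topple_ge (Γ : Set V) {v w : V} (h : w ≠ v) (φ : V → ℤ) : φ w ≤ toppleAt Γ v φ w := by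
  simp only [toppleAt, if_neg h]
  split_ifs <;> omega

lemma diamond (Γ : Set V) (a b c : V → ℤ) (hb : LegalStep Γ a b) (hc : LegalStep Γ a c) :
    ∃ d, Relation.ReflGen (LegalStep Γ) b d ∧ Relation.ReflTransGen (LegalStep Γ) c d := by
  obtain ⟨v, hv, hv4, rfl⟩ := hb
  obtain ⟨w, hw, hw4, rfl⟩ := hc
  by_cases h : v = w
  · subst h
    exact ⟨_, .refl, .refl⟩
  · refine ⟨toppleAt Γ w (toppleAt Γ v a), .single ⟨w, hw, ?_, rfl⟩,
      .single ⟨v, hv, ?_, topple_comm Γ w v a⟩⟩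
    · exact hw4.trans (topple_ge Γ (Ne.symm h) a)
    · exact hv4.trans (topple_ge Γ h a)

lemma eq_of_stable {Γ : Set V} {a b : V → ℤ} (ha : StableState Γ a)
    (h : Relation.ReflTransGen (LegalStep Γ) a b) : a = b := by
  rcases h.cases_head with h | ⟨c, ⟨v, hv, h4, -⟩, -⟩
  · exact h
  · have := ha v hv
    omega

lemma reach {Γ : Set V} {φ ψ : V → ℤ} (h : Relaxes Γ φ ψ) :
    Relation.ReflTransGen (LegalStep Γ) φ ψ ∧ StableState Γ ψ := by
  obtain ⟨m, ρ, ⟨rfl, hs, hst⟩, rfl⟩ := h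
  refine ⟨?_, hst⟩
  have : ∀ i ≤ m, Relation.ReflTransGen (LegalStep Γ) (ρ 0) (ρ i) := by
    intro i
    induction i with
    | zero => intro _; exact .refl
    | succ i ih => intro hi; exact (ih (by omega)).tail (hs i (by omega))
  exact this m le_rfl

lemma exists_relax {Γ : Set V} {φ : V → ℤ}
    (hno : ¬ ∃ ρ : ℕ → V → ℤ, ρ 0 = φ ∧ ∀ i : ℕ, LegalStep Γ (ρ i) (ρ (i + 1))) :
    ∃ ψ, Relaxes Γ φ ψ := by
  classical
  let f : (V → ℤ) → V → ℤ := fun a => if h : ∃ b, LegalStep Γ a b then h.choose else a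
  have hf : ∀ a, (∃ b, LegalStep Γ a b) → LegalStep Γ a (f a) := by
    intro a h
    simp only [f, dif_pos h]
    exact h.choose_spec
  let ρ : ℕ → V → ℤ := fun n => f^[n] φ
  have hsucc : ∀ i, ρ (i + 1) = f (ρ i) := fun i => Function.iterate_succ_apply' f i φ
  have hex : ∃ i, ¬ ∃ b, LegalStep Γ (ρ i) b := by
    by_contra hcon
    push Not at hcon
    exact hno ⟨ρ, rfl, fun i => by rw [hsucc]; exact hf _ (hcon i)⟩
  refine ⟨_, Nat.find hex, ρ, ⟨rfl, fun i hi => ?_, fun v hv => ?_⟩, rfl⟩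
  · rw [hsucc]
    exact hf _ (not_not.1 (Nat.find_min hex hi))
  · by_contra h
    exact Nat.find_spec hex ⟨_, v, hv, by omega, rfl⟩

/-- For any finite `Γ ⊆ ℤ²` and any state `φ` on `Γ`, there is no
infinite sequence of legal topplings starting from `φ` (every sequence of legal
topplings terminates after finitely many steps), a relaxation of `φ` exists, and the
resulting stable state is independent of the order of the legal topplings. -/
theorem statement0 (Γ : Set V) (hΓ : Γ.Finite) (φ : V → ℤ) (hφ : IsState Γ φ) :
    (¬ ∃ ρ : ℕ → V → ℤ, ρ 0 = φ ∧ ∀ i : ℕ, LegalStep Γ (ρ i) (ρ (i + 1))) ∧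
    (∃ ψ : V → ℤ, Relaxes Γ φ ψ) ∧
    (∀ ψ₁ ψ₂ : V → ℤ, Relaxes Γ φ ψ₁ → Relaxes Γ φ ψ₂ → ψ₁ = ψ₂) := by
  refine ⟨no_infinite hΓ hφ, exists_relax (no_infinite hΓ hφ), fun ψ₁ ψ₂ h₁ h₂ => ?_⟩
  obtain ⟨r₁, s₁⟩ := reach h₁
  obtain ⟨r₂, s₂⟩ := reach h₂
  obtain ⟨d, d₁, d₂⟩ := Relation.church_rosser (diamond Γ) r₁ r₂
  exact (eq_of_stable s₁ d₁).trans (eq_of_stable s₂ d₂).symm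
end

section
/- Least action principle: Let φ be a state on a finite set Γ ⊂ ℤ², and let 𝓗 be the set of all functions H : ℤ² → ℤ≥0 that vanish outside Γ and satisfy φ + ΔH ≤ 3 on Γ. Then 𝓗 is nonempty, the pointwise minimum F(v) = min{H(v) : H ∈ 𝓗} itself belongs to 𝓗, and φ° = φ + ΔF on Γ. -/
open Filter
open scoped Pointwise Topology

/-- The discrete Laplacian `ΔH(v) = -4H(v) + ∑_{w ∈ n(v)} H(w)`. -/
def lap (H : V → ℤ) (v : V) : ℤ := -4 * H v + ∑ w ∈ nbrs v, H w

/-- `H` belongs to the class `𝓗` for the state `φ` on `Γ`: it is nonnegative,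
vanishes outside `Γ`, and `φ + ΔH ≤ 3` on `Γ`. -/
def Odometer (Γ : Set V) (φ : V → ℤ) (H : V → ℤ) : Prop :=
  (∀ v, 0 ≤ H v) ∧ (∀ v ∉ Γ, H v = 0) ∧ ∀ v ∈ Γ, φ v + lap H v ≤ 3

theorem lap_mono {H K : V → ℤ} {v : V} (h : ∀ w, H w ≤ K w) (hv : H v = K v) :
    lap H v ≤ lap K v := by
  unfold lap
  rw [hv]
  have := Finset.sum_le_sum (s := nbrs v) (fun w _ => h w)
  linarith

theorem nbrs_symm {v w : V} : w ∈ nbrs v ↔ v ∈ nbrs w := by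
  obtain ⟨a, b⟩ := v
  obtain ⟨c, d⟩ := w
  simp only [nbrs, Finset.mem_insert, Finset.mem_singleton, Prod.mk.injEq]
  omega

theorem lap_four (H : V → ℤ) (v : V) : lap H v = -4 * H v + (H (v.1 + 1, v.2) +
    (H (v.1 - 1, v.2) + (H (v.1, v.2 + 1) + H (v.1, v.2 - 1)))) := by
  unfold lap nbrs
  rw [Finset.sum_insert, Finset.sum_insert, Finset.sum_insert, Finset.sum_singleton]
  all_goals simp only [Finset.mem_insert, Finset.mem_singleton, Prod.mk.injEq]
  all_goals omega

theorem lap_add_single (u : V → ℤ) (v w : V) :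
    lap (fun x => u x + if x = v then 1 else 0) w
      = lap u w - (if w = v then 4 else 0) + (if w ∈ nbrs v then 1 else 0) := by
  unfold lap
  simp only [Finset.sum_add_distrib, Finset.sum_ite_eq', nbrs_symm (v := v) (w := w)]
  split_ifs <;> ring

theorem odometer_exists (Γ : Set V) (hΓ : Γ.Finite) (φ : V → ℤ) :
    ∃ H : V → ℤ, Odometer Γ φ H := by
  classical
  obtain ⟨C, hC⟩ := (hΓ.image φ).bddAbove
  obtain ⟨N, hN⟩ := (hΓ.image (fun v => |v.1|)).bddAbove
  have hC' : ∀ v ∈ Γ, φ v ≤ |C| := fun v hv =>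
    (hC (Set.mem_image_of_mem _ hv)).trans (le_abs_self C)
  have hN' : ∀ v ∈ Γ, |v.1| ≤ N := fun v hv => hN (Set.mem_image_of_mem _ hv)
  let g : V → ℤ := fun v => |C| * ((N + 1) ^ 2 - v.1 ^ 2)
  have hg : ∀ v : V, |v.1| ≤ N + 1 → 0 ≤ g v := by
    intro v hv
    have := sq_le_sq' (abs_le.1 hv).1 (abs_le.1 hv).2
    exact mul_nonneg (abs_nonneg _) (by linarith)
  refine ⟨fun v => if v ∈ Γ then g v else 0, ?_, ?_, ?_⟩
  · intro v
    dsimp only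
    split_ifs with h
    · exact hg v (by linarith [hN' v h])
    · exact le_rfl
  · intro v hv
    simp [hv]
  · intro v hv
    have hb := hN' v hv
    have key : ∀ w : V, |w.1| ≤ N + 1 → (if w ∈ Γ then g w else 0) ≤ g w := by
      intro w hw
      split_ifs
      · exact le_rfl
      · exact hg w hw
    rw [abs_le] at hb
    have h1 := key (v.1 + 1, v.2) (abs_le.2 ⟨by dsimp only; linarith, by dsimp only; linarith⟩)
    have h2 := key (v.1 - 1, v.2) (abs_le.2 ⟨by dsimp only; linarith, by dsimp only; linarith⟩)
    have h3 := key (v.1, v.2 + 1) (abs_le.2 ⟨by dsimp only; linarith, by dsimp only; linarith⟩)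
    have h4 := key (v.1, v.2 - 1) (abs_le.2 ⟨by dsimp only; linarith, by dsimp only; linarith⟩)
    rw [lap_four]
    rw [if_pos hv]
    have h5 : -4 * g v + (g (v.1 + 1, v.2) + (g (v.1 - 1, v.2) +
        (g (v.1, v.2 + 1) + g (v.1, v.2 - 1)))) = -2 * |C| := by
      simp only [g]
      ring
    have := hC' v hv
    have := abs_nonneg C
    linarith

theorem odometer_min (Γ : Set V) (φ : V → ℤ) (hne : ∃ H : V → ℤ, Odometer Γ φ H) :
    ∃ F : V → ℤ, Odometer Γ φ F ∧ ∀ H : V → ℤ, Odometer Γ φ H → ∀ v, F v ≤ H v := by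
  have hex : ∀ v, ∃ K, Odometer Γ φ K ∧ ∀ H, Odometer Γ φ H → K v ≤ H v := by
    intro v
    obtain ⟨H₀, h₀⟩ := hne
    obtain ⟨n, ⟨K, hK, hKn⟩, hmin⟩ := Int.exists_least_of_bdd
      (P := fun n => ∃ H, Odometer Γ φ H ∧ H v = n)
      ⟨0, by rintro z ⟨H, hH, rfl⟩; exact hH.1 v⟩ ⟨_, H₀, h₀, rfl⟩
    exact ⟨K, hK, fun H hH => hKn ▸ hmin _ ⟨H, hH, rfl⟩⟩
  choose K hK hmin using hex
  refine ⟨fun v => K v v, ⟨fun v => (hK v).1 v, fun v hv => (hK v).2.1 v hv, ?_⟩,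
    fun H hH v => hmin v H hH⟩
  intro v hv
  have := lap_mono (H := fun v => K v v) (K := K v) (v := v)
    (fun w => hmin w _ (hK v)) rfl
  have := (hK v).2.2 v hv
  linarith

/-- least action principle. For a state `φ` on a finite `Γ ⊆ ℤ²`,
the class `𝓗` of nonnegative functions vanishing outside `Γ` with `φ + ΔH ≤ 3` on `Γ`
is nonempty, its pointwise minimum `F` again belongs to `𝓗`, and the result of the
relaxation of `φ` equals `φ + ΔF` on `Γ`. -/
theorem statement1 (Γ : Set V) (hΓ : Γ.Finite) (φ : V → ℤ) (hφ : IsState Γ φ) :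
    (∃ H : V → ℤ, Odometer Γ φ H) ∧
    ∃ F : V → ℤ, Odometer Γ φ F ∧ (∀ H : V → ℤ, Odometer Γ φ H → ∀ v, F v ≤ H v) ∧
      ∀ ψ : V → ℤ, Relaxes Γ φ ψ → ∀ v ∈ Γ, ψ v = φ v + lap F v := by
  have hne := odometer_exists Γ hΓ φ
  refine ⟨hne, ?_⟩
  obtain ⟨F, hF, hmin⟩ := odometer_min Γ φ hne
  refine ⟨F, hF, hmin, ?_⟩
  rintro ψ ⟨m, ρ, ⟨h0, hstep, hst⟩, rfl⟩
  have main : ∀ i ≤ m, ∃ u : V → ℤ, (∀ v, 0 ≤ u v) ∧ (∀ v ∉ Γ, u v = 0) ∧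
      (∀ v, u v ≤ F v) ∧ ∀ v ∈ Γ, ρ i v = φ v + lap u v := by
    intro i
    induction i with
    | zero =>
      intro _
      exact ⟨fun _ => 0, fun _ => le_rfl, fun _ _ => rfl, hF.1, fun v _ => by simp [h0, lap]⟩
    | succ i ih =>
      intro hi
      obtain ⟨u, hu0, hus, huF, hue⟩ := ih (by omega)
      obtain ⟨v, hv, h4, he⟩ := hstep i (by omega)
      have hlt : u v < F v := by
        refine lt_of_le_of_ne (huF v) fun heq => ?_
        have h1 := lap_mono huF heq
        have h2 := hF.2.2 v hv
        have h3 := hue v hv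
        linarith
      refine ⟨fun x => u x + if x = v then 1 else 0, ?_, ?_, ?_, ?_⟩
      · intro x
        have := hu0 x
        dsimp only
        split_ifs <;> linarith
      · intro x hx
        have : x ≠ v := fun h => hx (h ▸ hv)
        simp [this, hus x hx]
      · intro x
        dsimp only
        split_ifs with h
        · subst h
          omega
        · simpa using huF x
      · intro w hw
        rw [lap_add_single, he]
        simp only [toppleAt, hue w hw, hw, and_true]
        ring
  obtain ⟨u, hu0, hus, huF, hue⟩ := main m le_rfl
  have hod : Odometer Γ φ u := ⟨hu0, hus, fun v hv => by rw [← hue v hv]; exact hst v hv⟩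
  have : u = F := funext fun v => le_antisymm (huF v) (hmin u hod v)
  rw [← this]
  exact hue
end

section
/- Let φ be a state on a finite set Γ ⊂ ℤ² and let F be the pointwise minimum of the set 𝓗 of all functions H : ℤ² → ℤ≥0 vanishing outside Γ with φ + ΔH ≤ 3 on Γ. Then for every relaxation sequence of φ and every v ∈ ℤ², the number of legal topplings performed at the site v in that relaxation equals F(v). -/
open Filter
open scoped Pointwise Topology

/-- A relaxation of `φ` recording the toppled sites: at step `i < m` the site `σ i ∈ Γ`
with at least `4` grains is toppled, and the final state is stable. -/
def IsToppleSeq (Γ : Set V) (φ : V → ℤ) (m : ℕ) (σ : ℕ → V) (ρ : ℕ → V → ℤ) : Prop :=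
  ρ 0 = φ ∧ (∀ i < m, σ i ∈ Γ ∧ 4 ≤ ρ i (σ i) ∧ ρ (i + 1) = toppleAt Γ (σ i) (ρ i)) ∧
    StableState Γ (ρ m)

theorem nbrs_symm_aux (v w : V) : w ∈ nbrs v ↔ v ∈ nbrs w := by
  obtain ⟨a, b⟩ := v
  obtain ⟨c, d⟩ := w
  simp only [nbrs, Finset.mem_insert, Finset.mem_singleton, Prod.mk.injEq]
  omega

/-- Number of topplings at `v` among the first `k` ones. -/
def cnt (σ : ℕ → V) (k : ℕ) (v : V) : ℤ :=
  (((Finset.range k).filter (fun i => σ i = v)).card : ℤ)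

theorem cnt_zero (σ : ℕ → V) (v : V) : cnt σ 0 v = 0 := by simp [cnt]

theorem cnt_succ (σ : ℕ → V) (k : ℕ) (v : V) :
    cnt σ (k + 1) v = cnt σ k v + if σ k = v then 1 else 0 := by
  unfold cnt
  rw [Finset.range_add_one, Finset.filter_insert]
  split_ifs with h
  · rw [Finset.card_insert_of_notMem (by simp)]
    push_cast
    rfl
  · simp

theorem cnt_nonneg (σ : ℕ → V) (k : ℕ) (v : V) : 0 ≤ cnt σ k v := by
  unfold cnt
  positivity

theorem lap_cnt_succ (σ : ℕ → V) (k : ℕ) (w : V) :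
    lap (cnt σ (k + 1)) w = lap (cnt σ k) w - (if w = σ k then 4 else 0)
      + (if w ∈ nbrs (σ k) then 1 else 0) := by
  unfold lap
  simp only [cnt_succ, Finset.sum_add_distrib, Finset.sum_ite_eq, nbrs_symm_aux (σ k) w,
    eq_comm (a := w) (b := σ k)]
  split_ifs <;> ring

theorem seq_state (Γ : Set V) (φ : V → ℤ) (m : ℕ) (σ : ℕ → V) (ρ : ℕ → V → ℤ)
    (h : IsToppleSeq Γ φ m σ ρ) (k : ℕ) (hk : k ≤ m) (w : V) (hw : w ∈ Γ) :
    ρ k w = φ w + lap (cnt σ k) w := by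
  induction k with
  | zero => simp [h.1, lap, cnt_zero]
  | succ k ih =>
    rw [(h.2.1 k (by omega)).2.2, lap_cnt_succ]
    simp only [toppleAt, ih (by omega), hw, and_true]
    ring_nf

theorem cnt_le (Γ : Set V) (φ : V → ℤ) (m : ℕ) (σ : ℕ → V) (ρ : ℕ → V → ℤ)
    (h : IsToppleSeq Γ φ m σ ρ) (H : V → ℤ) (hH : Odometer Γ φ H)
    (k : ℕ) (hk : k ≤ m) (w : V) : cnt σ k w ≤ H w := by
  induction k generalizing w with
  | zero => simpa [cnt_zero] using hH.1 w
  | succ k ih =>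
    have ih' := ih (by omega)
    rw [cnt_succ]
    split_ifs with hw
    · by_contra hlt
      have heq : cnt σ k w = H w := le_antisymm (ih' w) (by omega)
      obtain ⟨h1, h2, -⟩ := h.2.1 k (by omega)
      rw [hw] at h1 h2
      rw [seq_state Γ φ m σ ρ h k (by omega) w h1] at h2
      have h3 := hH.2.2 w h1
      have h4 : ∑ x ∈ nbrs w, cnt σ k x ≤ ∑ x ∈ nbrs w, H x :=
        Finset.sum_le_sum fun x _ => ih' x
      unfold lap at h2 h3
      omega
    · simpa using ih' w

theorem cnt_odometer (Γ : Set V) (φ : V → ℤ) (m : ℕ) (σ : ℕ → V) (ρ : ℕ → V → ℤ)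
    (h : IsToppleSeq Γ φ m σ ρ) : Odometer Γ φ (cnt σ m) := by
  refine ⟨cnt_nonneg σ m, fun v hv => ?_, fun v hv => ?_⟩
  · unfold cnt
    rw [Finset.filter_eq_empty_iff.2]
    · simp
    · intro i hi hiv
      exact hv (hiv ▸ (h.2.1 i (Finset.mem_range.1 hi)).1)
  · rw [← seq_state Γ φ m σ ρ h m le_rfl v hv]
    exact h.2.2 v hv

/-- Let `F` be the pointwise minimum of the class `𝓗` of nonnegative
functions vanishing outside `Γ` with `φ + ΔH ≤ 3` on `Γ`. Then in every relaxation of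
`φ`, the number of legal topplings performed at a site `v` equals `F v`. -/
theorem statement2 (Γ : Set V) (hΓ : Γ.Finite) (φ : V → ℤ) (hφ : IsState Γ φ)
    (F : V → ℤ)
    (hF : ∀ v : V, IsLeast {n : ℤ | ∃ H : V → ℤ, Odometer Γ φ H ∧ H v = n} (F v)) :
    ∀ (m : ℕ) (σ : ℕ → V) (ρ : ℕ → V → ℤ), IsToppleSeq Γ φ m σ ρ →
      ∀ v : V, (((Finset.range m).filter (fun i => σ i = v)).card : ℤ) = F v := by
  intro m σ ρ h v
  obtain ⟨⟨H, hH, hHv⟩, hmin⟩ := hF v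
  apply le_antisymm
  · rw [← hHv]
    exact cnt_le Γ φ m σ ρ h H hH m le_rfl v
  · exact hmin ⟨cnt σ m, cnt_odometer Γ φ m σ ρ h, rfl⟩
end

section
/- Every Ω-tropical curve C can be represented as the intersection of Ω with a plane tropical curve: there exists a plane tropical curve C' ⊂ ℝ² (with positive integer weights on its edges) such that C = C' ∩ Ω as weighted graphs. -/
open Filter
open scoped Pointwise Topology

/-! ## Geometry: lattice polygons, scaled lattice sets, deviation sets -/

/-- The embedding of the lattice `ℤ²` into the plane `ℝ²`. -/
def toR (v : ℤ × ℤ) : ℝ × ℝ := ((v.1 : ℝ), (v.2 : ℝ))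

/-- `Ω` is a non-degenerate convex lattice polygon: the convex hull of a finite set of
lattice points, with nonempty interior. -/
def IsLatticePolygon (Ω : Set (ℝ × ℝ)) : Prop :=
  (∃ S : Finset (ℤ × ℤ), Ω = convexHull ℝ (toR '' ↑S)) ∧ (interior Ω).Nonempty

/-- `Γ_N = (NΩ) ∩ ℤ²`. -/
def latGrid (Ω : Set (ℝ × ℝ)) (N : ℕ) : Set V := {v : V | toR v ∈ (N : ℝ) • Ω}

/-- Coordinate-wise floor `[Np] ∈ ℤ²` of the rescaled point `Np`, `p ∈ ℝ²`. -/
noncomputable def flr (N : ℕ) (p : ℝ × ℝ) : V := (⌊(N : ℝ) * p.1⌋, ⌊(N : ℝ) * p.2⌋)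

open Classical in
/-- The perturbed maximal state `3 + ∑_{p ∈ P} δ_{[Np]}` on `Γ_N` (as a function on `ℤ²`
vanishing outside `Γ_N`). -/
noncomputable def stateN (Ω : Set (ℝ × ℝ)) (P : Finset (ℝ × ℝ)) (N : ℕ) : V → ℤ :=
  fun v => if v ∈ latGrid Ω N then 3 + ∑ p ∈ P, (if v = flr N p then 1 else 0) else 0

/-- The scaled deviation set `C_N = (1/N)·{v ∈ Γ_N : ψ v < 3}` of a state `ψ` on `Γ_N`. -/
def devSet (Ω : Set (ℝ × ℝ)) (N : ℕ) (ψ : V → ℤ) : Set (ℝ × ℝ) :=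
  {x | ∃ v ∈ latGrid Ω N, ψ v < 3 ∧ x = ((v.1 : ℝ) / N, (v.2 : ℝ) / N)}

/-- `l ∈ ℤ²` is the primitive integer vector of the direction `d ∈ ℝ²`:
its coordinates are coprime and `d` is a positive multiple of `l`. -/
def PrimOut (d : ℝ × ℝ) (l : ℤ × ℤ) : Prop :=
  Int.gcd l.1 l.2 = 1 ∧ ∃ t : ℝ, 0 < t ∧ d = t • toR l

/-- `d ∈ ℝ²` has rational slope (it is a positive multiple of an integer vector). -/
def RatDir (d : ℝ × ℝ) : Prop := ∃ l, PrimOut d l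

open Classical in
/-- The primitive integer vector of a direction `d` with rational slope
(junk value `0` otherwise). -/
noncomputable def prim (d : ℝ × ℝ) : ℤ × ℤ :=
  if h : ∃ l, PrimOut d l then h.choose else 0

/-- An edge (straight closed segment) recorded by its two endpoints. -/
abbrev Seg : Type := (ℝ × ℝ) × (ℝ × ℝ)

/-- The closed segment of an edge. -/
def seg (e : Seg) : Set (ℝ × ℝ) := segment ℝ e.1 e.2

/-! ## Ω-tropical curves -/

/-- A valid edge set: no degenerate edges and each edge recorded in one orientation only. -/
def EdgeSet (E : Finset Seg) : Prop := ∀ e ∈ E, e.1 ≠ e.2 ∧ (e.2, e.1) ∉ E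

/-- Edges meet only at common endpoints. -/
def Planar (E : Finset Seg) : Prop :=
  ∀ e ∈ E, ∀ e' ∈ E, e ≠ e' →
    seg e ∩ seg e' ⊆ ({e.1, e.2} : Set (ℝ × ℝ)) ∩ {e'.1, e'.2}

/-- The support of the graph: the union of its closed edges. -/
def gsupp (E : Finset Seg) : Set (ℝ × ℝ) := ⋃ e ∈ E, seg e

/-- `v` is a vertex of the graph `E`. -/
def IsVert (E : Finset Seg) (v : ℝ × ℝ) : Prop := ∃ e ∈ E, e.1 = v ∨ e.2 = v

/-- The primitive integer vector of the edge `e`, oriented out of its endpoint `v`. -/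
noncomputable def outDir (v : ℝ × ℝ) (e : Seg) : ℤ × ℤ :=
  if e.1 = v then prim (e.2 - e.1) else prim (e.1 - e.2)

open Classical in
/-- The balancing sum `∑_{e ∈ E_v} m_e l_e` at `v`, over edges incident to `v`, with
`l_e` oriented out of `v`. -/
noncomputable def balSum (E : Finset Seg) (m : Seg → ℕ) (v : ℝ × ℝ) : ℤ × ℤ :=
  ∑ e ∈ E.filter (fun e => e.1 = v ∨ e.2 = v), (m e : ℤ) • outDir v e

/-- The segment `[a, b]` is a side of the polygon `Ω`: its endpoints are distinct
vertices (extreme points) of `Ω` and it lies in the boundary of `Ω`. -/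
def IsSide (Ω : Set (ℝ × ℝ)) (a b : ℝ × ℝ) : Prop :=
  a ≠ b ∧ a ∈ Set.extremePoints ℝ Ω ∧ b ∈ Set.extremePoints ℝ Ω ∧
    segment ℝ a b ⊆ frontier Ω

/-- A labeling of the sides of `Ω` by positive integers (independent of orientation). -/
def SideLabel (Ω : Set (ℝ × ℝ)) (d : Seg → ℤ) : Prop :=
  ∀ a b : ℝ × ℝ, IsSide Ω a b → 0 < d (a, b) ∧ d (a, b) = d (b, a)

/-- The outer balancing equations: at every vertex `v` of `Ω` with incident sides
`s₁ = [v,a]`, `s₂ = [v,b]`, one has `∑_{e ∈ E_v} m_e l_e = d_{s₁} l_{s₁} + d_{s₂} l_{s₂}`. -/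
def OuterBalEq (Ω : Set (ℝ × ℝ)) (E : Finset Seg) (m : Seg → ℕ) (d : Seg → ℤ) : Prop :=
  ∀ v ∈ Set.extremePoints ℝ Ω, ∀ a b : ℝ × ℝ, a ≠ b →
    IsSide Ω v a → IsSide Ω v b →
      balSum E m v = d (v, a) • prim (a - v) + d (v, b) • prim (b - v)

/-- `(E, m)` is an `Ω`-tropical curve: a finite weighted planar graph contained in `Ω`
whose edges have rational slopes and positive integer weights, meeting `∂Ω` exactly in
the vertices of `Ω`, balanced at every vertex interior to `Ω`, and satisfying the outer
balancing condition at the vertices of `Ω` for a unique positive labeling of the sides. -/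
def OmegaTropCurve (Ω : Set (ℝ × ℝ)) (E : Finset Seg) (m : Seg → ℕ) : Prop :=
  EdgeSet E ∧ Planar E ∧ (∀ e ∈ E, 0 < m e) ∧ (∀ e ∈ E, RatDir (e.2 - e.1)) ∧
  gsupp E ⊆ Ω ∧
  gsupp E ∩ frontier Ω = Set.extremePoints ℝ Ω ∧
  (∀ v : ℝ × ℝ, IsVert E v → v ∈ interior Ω → balSum E m v = 0) ∧
  ∃ d : Seg → ℤ, SideLabel Ω d ∧ OuterBalEq Ω E m d ∧
    ∀ d' : Seg → ℤ, SideLabel Ω d' → OuterBalEq Ω E m d' →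
      ∀ a b : ℝ × ℝ, IsSide Ω a b → d' (a, b) = d (a, b)

/-! ## Plane tropical curves -/

/-- Combinatorial data of a plane tropical curve: finitely many bounded edges (segments)
and unbounded edges (rays, given by a base point and a primitive integer direction),
with positive integer weights. -/
structure PlaneTropData where
  segs : Finset Seg
  rays : Finset ((ℝ × ℝ) × (ℤ × ℤ))
  msegs : Seg → ℕ
  mrays : (ℝ × ℝ) × (ℤ × ℤ) → ℕ

/-- The closed ray from `r.1` in the direction `r.2`. -/
def raySet (r : (ℝ × ℝ) × (ℤ × ℤ)) : Set (ℝ × ℝ) :=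
  {x | ∃ t : ℝ, 0 ≤ t ∧ x = r.1 + t • toR r.2}

/-- The support of a plane tropical curve. -/
def ptcSupp (C : PlaneTropData) : Set (ℝ × ℝ) :=
  (⋃ e ∈ C.segs, seg e) ∪ ⋃ r ∈ C.rays, raySet r

/-- `v` is a vertex of the plane tropical curve. -/
def ptcVert (C : PlaneTropData) (v : ℝ × ℝ) : Prop :=
  (∃ e ∈ C.segs, e.1 = v ∨ e.2 = v) ∨ ∃ r ∈ C.rays, r.1 = v

open Classical in
/-- The balancing sum at `v`: incident bounded edges and rays emanating from `v`,
with multiplicities, all oriented out of `v`. -/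
noncomputable def ptcBalSum (C : PlaneTropData) (v : ℝ × ℝ) : ℤ × ℤ :=
  balSum C.segs C.msegs v +
    ∑ r ∈ C.rays.filter (fun r => r.1 = v), (C.mrays r : ℤ) • r.2

/-- `C` is a plane tropical curve: a planar graph in `ℝ²` with finitely many edges
(possibly unbounded) of rational slope and positive integer weight, satisfying the
balancing condition at every vertex. -/
def IsPlaneTropCurve (C : PlaneTropData) : Prop :=
  EdgeSet C.segs ∧
  (∀ e ∈ C.segs, 0 < C.msegs e ∧ RatDir (e.2 - e.1)) ∧
  (∀ r ∈ C.rays, 0 < C.mrays r ∧ Int.gcd r.2.1 r.2.2 = 1) ∧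
  (∀ e ∈ C.segs, ∀ e' ∈ C.segs, e ≠ e' →
    seg e ∩ seg e' ⊆ ({e.1, e.2} : Set (ℝ × ℝ)) ∩ {e'.1, e'.2}) ∧
  (∀ e ∈ C.segs, ∀ r ∈ C.rays,
    seg e ∩ raySet r ⊆ ({e.1, e.2} : Set (ℝ × ℝ)) ∩ {r.1}) ∧
  (∀ r ∈ C.rays, ∀ r' ∈ C.rays, r ≠ r' →
    raySet r ∩ raySet r' ⊆ ({r.1} : Set (ℝ × ℝ)) ∩ {r'.1}) ∧
  ∀ v : ℝ × ℝ, ptcVert C v → ptcBalSum C v = 0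

/-- The plane tropical curve `C'` extends the `Ω`-tropical curve `(E, m)`, i.e.
`C = C' ∩ Ω` as weighted graphs: the support of `C'` meets `Ω` exactly in the support
of `E`, and every edge of `E` lies in an edge of `C'` of the same weight. -/
def ExtendsCurve (Ω : Set (ℝ × ℝ)) (E : Finset Seg) (m : Seg → ℕ)
    (C : PlaneTropData) : Prop :=
  IsPlaneTropCurve C ∧ ptcSupp C ∩ Ω = gsupp E ∧
  ∀ e ∈ E, (∃ e' ∈ C.segs, seg e ⊆ seg e' ∧ C.msegs e' = m e) ∨
    (∃ r ∈ C.rays, seg e ⊆ raySet r ∧ C.mrays r = m e)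


/-! ### Planar geometry helpers -/

/-- The cross product. -/
def cr (p q : ℝ × ℝ) : ℝ := p.1 * q.2 - p.2 * q.1

theorem toR_ne_zero {l : ℤ × ℤ} (h : Int.gcd l.1 l.2 = 1) : toR l ≠ 0 := by
  intro h0
  have h1 : (l.1 : ℝ) = 0 := congrArg Prod.fst h0
  have h2 : (l.2 : ℝ) = 0 := congrArg Prod.snd h0
  have h1' : l.1 = 0 := by exact_mod_cast h1
  have h2' : l.2 = 0 := by exact_mod_cast h2
  simp [h1', h2'] at h

theorem toR_neg (l : ℤ × ℤ) : toR (-l) = - toR l := by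
  simp [toR]

theorem primOut_unique {d : ℝ × ℝ} {l l' : ℤ × ℤ} (h : PrimOut d l) (h' : PrimOut d l') :
    l = l' := by
  obtain ⟨g, t, ht, e⟩ := h
  obtain ⟨g', t', ht', e'⟩ := h'
  have e1 : t * l.1 = t' * l'.1 := by
    have := congrArg Prod.fst (e.symm.trans e'); simpa [toR] using this
  have e2 : t * l.2 = t' * l'.2 := by
    have := congrArg Prod.snd (e.symm.trans e'); simpa [toR] using this
  -- cross product vanishes
  have hc : l.1 * l'.2 = l.2 * l'.1 := by
    have : (l.1 : ℝ) * l'.2 = l.2 * l'.1 := by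
      have : t * t' * ((l.1 : ℝ) * l'.2 - l.2 * l'.1) = 0 := by
        linear_combination (t' * l'.2) * e1 - (t' * l'.1) * e2
      have h0 : t * t' ≠ 0 := by positivity
      have := (mul_eq_zero.mp this).resolve_left h0
      linarith
    exact_mod_cast this
  have c : IsCoprime l.1 l.2 := Int.isCoprime_iff_gcd_eq_one.mpr g
  have c' : IsCoprime l'.1 l'.2 := Int.isCoprime_iff_gcd_eq_one.mpr g'
  obtain ⟨x, y, hxy⟩ := c
  obtain ⟨x', y', hxy'⟩ := c'
  -- l = k l', with k = x' l1 + y' l2 ; l' = k' l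
  set k := x' * l.1 + y' * l.2 with hk
  have k1 : l.1 = k * l'.1 := by
    rw [hk]; linear_combination (-l.1) * hxy' + y' * hc
  have k2 : l.2 = k * l'.2 := by
    rw [hk]; linear_combination (-l.2) * hxy' - x' * hc
  have hu : k ∣ 1 := ⟨x * l'.1 + y * l'.2, by rw [← hxy]; nth_rewrite 1 [k1]; nth_rewrite 1 [k2]; ring⟩
  have hk1 : k = 1 ∨ k = -1 := Int.isUnit_iff.mp (isUnit_of_dvd_one hu)
  rcases hk1 with h | h
  · rw [h] at k1 k2
    exact Prod.ext (by linarith) (by linarith)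
  · exfalso
    rw [h] at k1 k2
    have r1 : (l.1 : ℝ) = - l'.1 := by exact_mod_cast (by linarith : l.1 = - l'.1)
    have r2 : (l.2 : ℝ) = - l'.2 := by exact_mod_cast (by linarith : l.2 = - l'.2)
    have z1 : (t + t') * l'.1 = 0 := by rw [r1] at e1; linarith
    have z2 : (t + t') * l'.2 = 0 := by rw [r2] at e2; linarith
    have h0 : t + t' ≠ 0 := by positivity
    exact toR_ne_zero g' (Prod.ext ((mul_eq_zero.mp z1).resolve_left h0)
      ((mul_eq_zero.mp z2).resolve_left h0))

theorem prim_eq {d : ℝ × ℝ} {l : ℤ × ℤ} (h : PrimOut d l) : prim d = l := by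
  unfold prim
  have hex : ∃ l, PrimOut d l := ⟨l, h⟩
  rw [dif_pos hex]
  exact primOut_unique hex.choose_spec h

theorem prim_spec {d : ℝ × ℝ} (h : RatDir d) : PrimOut d (prim d) := by
  obtain ⟨l, hl⟩ := h
  rw [prim_eq hl]; exact hl

theorem ratDir_of_int {z : ℤ × ℤ} (hz : z ≠ 0) : RatDir (toR z) := by
  have hg : 0 < Int.gcd z.1 z.2 := by
    rw [Nat.pos_iff_ne_zero, Ne, Int.gcd_eq_zero_iff]
    rintro ⟨h1, h2⟩; exact hz (Prod.ext h1 h2)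
  obtain ⟨a, b, hc, h1, h2⟩ := Int.exists_gcd_one hg
  refine ⟨(a, b), hc, (Int.gcd z.1 z.2 : ℝ), by exact_mod_cast hg, ?_⟩
  have r1 : (z.1 : ℝ) = a * (Int.gcd z.1 z.2 : ℝ) := by exact_mod_cast h1
  have r2 : (z.2 : ℝ) = b * (Int.gcd z.1 z.2 : ℝ) := by exact_mod_cast h2
  refine Prod.ext ?_ ?_
  · simp only [toR, Prod.smul_fst, smul_eq_mul]; rw [mul_comm]; exact r1
  · simp only [toR, Prod.smul_snd, smul_eq_mul]; rw [mul_comm]; exact r2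

theorem exists_smul_of_cr {p q : ℝ × ℝ} (hp : p ≠ 0) (h : cr p q = 0) :
    ∃ t : ℝ, q = t • p := by
  unfold cr at h
  by_cases h1 : p.1 = 0
  · have h2 : p.2 ≠ 0 := fun h2 => hp (Prod.ext h1 h2)
    refine ⟨q.2 / p.2, Prod.ext ?_ ?_⟩
    · rw [h1] at h
      have : p.2 * q.1 = 0 := by linarith
      simp [h1, (mul_eq_zero.mp this).resolve_left h2]
    · simp [h2]
  · refine ⟨q.1 / p.1, Prod.ext ?_ ?_⟩
    · simp [h1]
    · simp only [Prod.smul_snd, smul_eq_mul]; field_simp; linarith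

/-- An extreme point is not a proper convex combination. -/
theorem extreme_not_between {Ω : Set (ℝ × ℝ)} {v x : ℝ × ℝ}
    (hv : v ∈ Set.extremePoints ℝ Ω) (hx : x ∈ Ω) (hxv : x ≠ v) {t : ℝ} (ht : 0 < t) :
    v + t • (v - x) ∉ Ω := by
  intro hy
  rw [mem_extremePoints] at hv
  refine hxv (hv.2 x hx _ hy ⟨t / (1 + t), 1 / (1 + t), by positivity, by positivity, ?_, ?_⟩).1
  · field_simp; ring
  · refine Prod.ext ?_ ?_ <;>
    · simp only [Prod.fst_add, Prod.snd_add, Prod.smul_fst, Prod.smul_snd, Prod.fst_sub,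
        Prod.snd_sub, smul_eq_mul]
      field_simp; ring

theorem extreme_collinear {Ω : Set (ℝ × ℝ)} {v a b : ℝ × ℝ}
    (hv : v ∈ Set.extremePoints ℝ Ω) (ha : a ∈ Set.extremePoints ℝ Ω)
    (hb : b ∈ Set.extremePoints ℝ Ω) (hav : a ≠ v) (hbv : b ≠ v)
    (h : cr (a - v) (b - v) = 0) : a = b := by
  obtain ⟨t, ht⟩ := exists_smul_of_cr (sub_ne_zero.mpr hav) h
  have hbt : b = v + t • (a - v) := by rw [← ht]; abel
  by_contra hab
  rcases lt_trichotomy t 0 with h0 | h0 | h0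
  · refine extreme_not_between hv ha.1 hav (neg_pos.mpr h0) ?_
    convert hb.1 using 1
    rw [hbt, ← neg_sub a v]; module
  · apply hbv; rw [hbt, h0]; simp
  · rcases lt_trichotomy t 1 with h1 | h1 | h1
    · refine extreme_not_between hb ha.1 hab (t := t / (1 - t)) (div_pos h0 (by linarith)) ?_
      convert hv.1 using 1
      rw [hbt]
      have : 1 - t ≠ 0 := by linarith
      refine Prod.ext ?_ ?_ <;>
      · simp only [Prod.fst_add, Prod.snd_add, Prod.smul_fst, Prod.smul_snd, Prod.fst_sub,
          Prod.snd_sub, smul_eq_mul]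
        field_simp; ring
    · apply hab; rw [hbt, h1]; simp
    · refine extreme_not_between ha hv.1 (Ne.symm hav) (t := t - 1) (by linarith) ?_
      convert hb.1 using 1
      rw [hbt]; module

/-- A linear functional vanishing on a nonzero vector is a multiple of the cross product. -/
theorem clm_apply (f : (ℝ × ℝ) →L[ℝ] ℝ) (p : ℝ × ℝ) :
    f p = p.1 * f (1, 0) + p.2 * f (0, 1) := by
  have : p = p.1 • ((1 : ℝ), (0 : ℝ)) + p.2 • ((0 : ℝ), (1 : ℝ)) := by
    refine Prod.ext ?_ ?_ <;> simp
  conv_lhs => rw [this]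
  rw [map_add, map_smul, map_smul]; simp

theorem side_sign {Ω : Set (ℝ × ℝ)} (hc : Convex ℝ Ω) 
    (hi : (interior Ω).Nonempty) {v a : ℝ × ℝ} (h : IsSide Ω v a) :
    (∀ y ∈ Ω, 0 ≤ cr (a - v) (y - v)) ∨ (∀ y ∈ Ω, cr (a - v) (y - v) ≤ 0) := by
  obtain ⟨hne, hv, ha, hs⟩ := h
  set q : ℝ × ℝ := midpoint ℝ v a with hq
  have hqf : q ∈ frontier Ω := hs (midpoint_mem_segment v a)
  have hqi : q ∉ interior Ω := hqf.2
  obtain ⟨f, hf⟩ := geometric_hahn_banach_open_point hc.interior isOpen_interior hqi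
  have hf' : ∀ y ∈ Ω, f y ≤ f q := by
    intro y hy
    have hy' : y ∈ closure (interior Ω) := by
      rw [hc.closure_interior_eq_closure_of_nonempty_interior hi]; exact subset_closure hy
    have : closure (interior Ω) ⊆ {y | f y ≤ f q} :=
      closure_minimal (fun z hz => (hf z hz).le) (isClosed_le f.continuous continuous_const)
    exact this hy'
  have e : f q = (f v + f a) / 2 := by
    rw [hq, midpoint_eq_smul_add, map_smul, map_add]
    simp; ring
  have e1 := hf' v hv.1
  have e2 := hf' a ha.1
  have e3 : f a = f v := by linarith
  have e4 : f q = f v := by linarith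
  obtain ⟨z, hz⟩ := hi
  have hz' := hf z hz
  set α := f (1, 0) with hα
  set β := f (0, 1) with hβ
  have hlin : (a - v).1 * α + (a - v).2 * β = 0 := by
    rw [← clm_apply, map_sub]; linarith
  -- (α, β) is a multiple of (-(a-v).2, (a-v).1)
  obtain ⟨k, hk⟩ := exists_smul_of_cr (p := (-(a - v).2, (a - v).1)) (q := (α, β)) (by
    intro h0
    apply hne
    have h1 := congrArg Prod.fst h0
    have h2 := congrArg Prod.snd h0
    simp only [Prod.fst_sub, Prod.snd_sub, Prod.fst_zero, Prod.snd_zero] at h1 h2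
    exact Prod.ext (by linarith) (by linarith)) (by unfold cr; simp only; linarith)
  have k1 := congrArg Prod.fst hk
  have k2 := congrArg Prod.snd hk
  simp only [Prod.smul_fst, Prod.smul_snd, smul_eq_mul] at k1 k2
  have key : ∀ y, f y - f v = k * cr (a - v) (y - v) := by
    intro y
    rw [← map_sub, clm_apply f (y - v), ← hα, ← hβ, k1, k2]; unfold cr; ring
  rcases lt_trichotomy k 0 with hk0 | hk0 | hk0
  · left; intro y hy
    have := key y; have := hf' y hy
    by_contra hneg; push Not at hneg
    nlinarith
  · exfalso; have := key z; rw [hk0] at this; linarith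
  · right; intro y hy
    have := key y; have := hf' y hy
    by_contra hneg; push Not at hneg
    nlinarith

theorem not_interior_of_cr {Ω : Set (ℝ × ℝ)} {v p x : ℝ × ℝ} (hp : p ≠ 0) {σ : ℝ} (hσ : σ ≠ 0)
    (hall : ∀ y ∈ Ω, 0 ≤ σ * cr p (y - v)) (hx : σ * cr p (x - v) = 0) : x ∉ interior Ω := by
  intro hxi
  -- move in the direction -σ * rot p
  set q : ℝ × ℝ := (σ * p.2, - σ * p.1) with hq
  have hcont : Continuous (fun t : ℝ => x + t • q) := by fun_prop
  have hop : IsOpen ((fun t : ℝ => x + t • q) ⁻¹' interior Ω) := isOpen_interior.preimage hcont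
  have h0 : (0 : ℝ) ∈ (fun t : ℝ => x + t • q) ⁻¹' interior Ω := by simpa using hxi
  obtain ⟨ε, hε, hb⟩ := Metric.isOpen_iff.mp hop 0 h0
  have hm : ε / 2 ∈ Metric.ball (0 : ℝ) ε := by
    rw [Metric.mem_ball, Real.dist_eq]; rw [sub_zero, abs_of_pos (by linarith)]; linarith
  have h1 := hall _ (interior_subset (hb hm))
  have hpp : 0 < p.1 ^ 2 + p.2 ^ 2 := by
    rcases not_and_or.mp (fun h : p.1 = 0 ∧ p.2 = 0 => hp (Prod.ext h.1 h.2)) with h | h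
    · have := pow_pos (abs_pos.mpr h) 2; rw [sq_abs] at this; positivity
    · have := pow_pos (abs_pos.mpr h) 2; rw [sq_abs] at this; positivity
  have e : σ * cr p (x + (ε / 2) • q - v) =
      σ * cr p (x - v) - (ε / 2) * σ ^ 2 * (p.1 ^ 2 + p.2 ^ 2) := by
    simp only [cr, hq, Prod.fst_add, Prod.snd_add, Prod.fst_sub, Prod.snd_sub, Prod.smul_fst,
      Prod.smul_snd, smul_eq_mul]; ring
  rw [e, hx] at h1
  have : 0 < (ε / 2) * σ ^ 2 * (p.1 ^ 2 + p.2 ^ 2) := by positivity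
  linarith

theorem exists_side {Ω : Set (ℝ × ℝ)} (S : Finset (ℤ × ℤ)) (hS : Ω = convexHull ℝ (toR '' ↑S))
    (hi : (interior Ω).Nonempty) {v : ℝ × ℝ} (hv : v ∈ Set.extremePoints ℝ Ω) {σ : ℝ}
    (hσ : σ ≠ 0) : ∃ a, IsSide Ω v a ∧ ∀ y ∈ Ω, 0 ≤ σ * cr (a - v) (y - v) := by
  classical
  have hfin : (toR '' (S : Set (ℤ × ℤ))).Finite := S.finite_toSet.image _
  have hcomp : IsCompact Ω := by rw [hS]; exact hfin.isCompact_convexHull (𝕜 := ℝ)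
  have hconv : Convex ℝ Ω := hS ▸ convex_convexHull ℝ _
  set T : Set (ℝ × ℝ) := (toR '' (S : Set (ℤ × ℤ))) \ {v} with hT
  have hTfin : T.Finite := hfin.subset Set.sdiff_subset
  have hTΩ : ∀ y ∈ T, y ∈ Ω := fun y hy => hS ▸ subset_convexHull ℝ _ hy.1
  have hvT : v ∉ convexHull ℝ T := by
    have h1 := hconv.mem_extremePoints_iff_convex_sdiff.mp hv
    have : convexHull ℝ T ⊆ Ω \ {v} := convexHull_min (fun y hy => ⟨hTΩ y hy, hy.2⟩) h1.2
    exact fun h => (this h).2 rfl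
  have hTne : T.Nonempty := by
    by_contra hne
    rw [Set.not_nonempty_iff_eq_empty] at hne
    have hsub : toR '' (S : Set (ℤ × ℤ)) ⊆ {v} := Set.sdiff_eq_empty.mp hne
    have h2 : Ω ⊆ {v} := by rw [hS]; exact convexHull_min hsub (convex_singleton v)
    have h3 : interior Ω ⊆ interior {v} := interior_mono h2
    rw [interior_singleton] at h3
    obtain ⟨z, hz⟩ := hi
    exact h3 hz
  obtain ⟨g, u, hgv, hgT⟩ := geometric_hahn_banach_point_closed (convex_convexHull ℝ T)
    (hTfin.isCompact_convexHull (𝕜 := ℝ)).isClosed hvT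
  have hg : ∀ y ∈ T, 0 < g (y - v) := by
    intro y hy
    have := hgT y (subset_convexHull ℝ _ hy)
    rw [map_sub]; linarith
  set n : ℝ × ℝ := (g (1, 0), g (0, 1)) with hn
  obtain ⟨a, haT, hamin⟩ := Set.exists_min_image T (fun y => σ * cr n (y - v) / g (y - v)) hTfin hTne
  have hga := hg a haT
  have hnn : 0 < n.1 ^ 2 + n.2 ^ 2 := by
    by_contra hneg
    have h1 : n.1 = 0 := by nlinarith [sq_nonneg n.1, sq_nonneg n.2]
    have h2 : n.2 = 0 := by nlinarith [sq_nonneg n.1, sq_nonneg n.2]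
    rw [clm_apply] at hga
    simp only [hn] at h1 h2
    rw [h1, h2] at hga; simp at hga
  have hcT : ∀ y ∈ T, 0 ≤ σ * cr (a - v) (y - v) := by
    intro y hy
    have h1 := hamin y hy
    have hgy := hg y hy
    rw [div_le_div_iff₀ hga hgy] at h1
    have e : σ * cr n (y - v) * g (a - v) - σ * cr n (a - v) * g (y - v)
        = (n.1 ^ 2 + n.2 ^ 2) * (σ * cr (a - v) (y - v)) := by
      rw [clm_apply g (a - v), clm_apply g (y - v)]
      simp only [hn, cr]; ring
    by_contra hneg; push Not at hneg
    have := mul_neg_of_pos_of_neg hnn hneg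
    linarith
  have hcΩ : ∀ y ∈ Ω, 0 ≤ σ * cr (a - v) (y - v) := by
    have hcv : Convex ℝ {y : ℝ × ℝ | 0 ≤ σ * cr (a - v) (y - v)} := by
      intro x hx y hy s t hs ht hst
      simp only [Set.mem_ofPred_eq] at *
      have e : σ * cr (a - v) (s • x + t • y - v)
          = s * (σ * cr (a - v) (x - v)) + t * (σ * cr (a - v) (y - v)) := by
        have : t = 1 - s := by linarith
        subst this
        simp only [cr, Prod.fst_add, Prod.snd_add, Prod.fst_sub, Prod.snd_sub, Prod.smul_fst,
          Prod.smul_snd, smul_eq_mul]; ring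
      rw [e]; positivity
    intro y hy
    rw [hS] at hy
    refine convexHull_min ?_ hcv hy
    intro z hz
    by_cases hzv : z = v
    · simp [hzv, cr]
    · exact hcT z ⟨hz, hzv⟩
  -- the face
  set F : Set (ℝ × ℝ) := Ω ∩ {y | cr (a - v) (y - v) = 0} with hF
  have hFc : IsCompact F := by
    refine hcomp.inter_right (isClosed_eq ?_ continuous_const)
    unfold cr; fun_prop
  have haF : a ∈ F := ⟨hTΩ a haT, by simp [cr]; ring⟩
  obtain ⟨b, hbF, hbmax⟩ := hFc.exists_isMaxOn ⟨a, haF⟩ g.continuous.continuousOn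
  have hgab : g a ≤ g b := hbmax haF
  have hgbv : 0 < g (b - v) := by rw [map_sub] at *; linarith
  have hav : a - v ≠ 0 := fun h => by rw [h] at hga; simp at hga
  have hbv : b ≠ v := fun h => by rw [h] at hgbv; simp at hgbv
  obtain ⟨t, ht⟩ := exists_smul_of_cr hav hbF.2
  have htpos : 0 < t := by
    rw [ht, map_smul, smul_eq_mul] at hgbv
    exact pos_of_mul_pos_left hgbv hga.le
  have hbΩ : ∀ y ∈ Ω, 0 ≤ σ * cr (b - v) (y - v) := by
    intro y hy
    have := hcΩ y hy
    rw [ht]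
    have e : σ * cr (t • (a - v)) (y - v) = t * (σ * cr (a - v) (y - v)) := by
      simp only [cr, Prod.smul_fst, Prod.smul_snd, smul_eq_mul]; ring
    rw [e]; positivity
  refine ⟨b, ⟨Ne.symm hbv, hv, ?_, ?_⟩, hbΩ⟩
  · -- b is extreme
    rw [mem_extremePoints_iff_left]
    refine ⟨hbF.1, ?_⟩
    intro x hx y hy hb
    obtain ⟨s, r, hs, hr, hsr, hbe⟩ := hb
    have ex := hcΩ x hx
    have ey := hcΩ y hy
    have ecr : s * (σ * cr (a - v) (x - v)) + r * (σ * cr (a - v) (y - v)) = 0 := by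
      have : σ * cr (a - v) (b - v) = 0 := by rw [hbF.2, mul_zero]
      rw [← this, ← hbe]
      have : r = 1 - s := by linarith
      subst this
      simp only [cr, Prod.fst_add, Prod.snd_add, Prod.fst_sub, Prod.snd_sub, Prod.smul_fst,
          Prod.smul_snd, smul_eq_mul]; ring
    have cx : cr (a - v) (x - v) = 0 := by
      have : σ * cr (a - v) (x - v) = 0 := by
        have h1 : 0 ≤ r * (σ * cr (a - v) (y - v)) := by positivity
        have h2 : 0 ≤ s * (σ * cr (a - v) (x - v)) := by positivity
        have h3 : s * (σ * cr (a - v) (x - v)) = 0 := by linarith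
        exact (mul_eq_zero.mp h3).resolve_left hs.ne'
      exact (mul_eq_zero.mp this).resolve_left hσ
    have cy : cr (a - v) (y - v) = 0 := by
      have : σ * cr (a - v) (y - v) = 0 := by
        have h1 : 0 ≤ r * (σ * cr (a - v) (y - v)) := by positivity
        have h2 : 0 ≤ s * (σ * cr (a - v) (x - v)) := by positivity
        have h3 : r * (σ * cr (a - v) (y - v)) = 0 := by linarith
        exact (mul_eq_zero.mp h3).resolve_left hr.ne'
      exact (mul_eq_zero.mp this).resolve_left hσ
    have gx : g x ≤ g b := hbmax (⟨hx, cx⟩ : x ∈ F)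
    have gy : g y ≤ g b := hbmax (⟨hy, cy⟩ : y ∈ F)
    have ge : s * g x + r * g y = g b := by
      rw [← hbe, map_add, map_smul, map_smul]; simp
    have gxb : g x = g b := by
      have : r = 1 - s := by linarith
      subst this
      have h1 : s * (g b - g x) + (1 - s) * (g b - g y) = 0 := by linarith
      have h2 : 0 ≤ s * (g b - g x) := mul_nonneg hs.le (by linarith)
      have h3 : 0 ≤ (1 - s) * (g b - g y) := mul_nonneg hr.le (by linarith)
      have h4 : s * (g b - g x) = 0 := by linarith
      have := (mul_eq_zero.mp h4).resolve_left hs.ne'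
      linarith
    obtain ⟨t', ht'⟩ := exists_smul_of_cr hav cx
    have hgx : g (x - v) = t' * g (a - v) := by rw [ht', map_smul]; rfl
    have hgb : g (b - v) = t * g (a - v) := by rw [ht, map_smul]; rfl
    have hgg : g (x - v) = g (b - v) := by rw [map_sub, map_sub, gxb]
    have htt : t' = t := by
      rw [hgx, hgb] at hgg
      exact mul_right_cancel₀ hga.ne' hgg
    have : x - v = b - v := by rw [ht', ht, htt]
    exact sub_left_injective this
  · intro x hx
    have hxΩ : x ∈ Ω := hconv.segment_subset hv.1 hbF.1 hx
    rw [hcomp.isClosed.frontier_eq]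
    refine ⟨hxΩ, not_interior_of_cr (sub_ne_zero.mpr hbv) hσ hbΩ ?_⟩
    obtain ⟨s, r, hs, hr, hsr, rfl⟩ := hx
    have : s = 1 - r := by linarith
    subst this
    simp only [cr, Prod.fst_add, Prod.snd_add, Prod.fst_sub, Prod.snd_sub, Prod.smul_fst,
          Prod.smul_snd, smul_eq_mul]; ring

/-- Each vertex of the polygon has exactly two sides. -/
theorem two_sides {Ω : Set (ℝ × ℝ)} (hΩ : IsLatticePolygon Ω) {v : ℝ × ℝ}
    (hv : v ∈ Set.extremePoints ℝ Ω) :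
    ∃ a b, a ≠ b ∧ IsSide Ω v a ∧ IsSide Ω v b ∧ ∀ c, IsSide Ω v c → c = a ∨ c = b := by
  obtain ⟨⟨S, hS⟩, hi⟩ := hΩ
  obtain ⟨a, ha, hal⟩ := exists_side S hS hi hv (σ := 1) one_ne_zero
  obtain ⟨b, hb, hbr⟩ := exists_side S hS hi hv (σ := -1) (by norm_num)
  have hconv : Convex ℝ Ω := hS ▸ convex_convexHull ℝ _
  have hcl : IsClosed Ω := by
    rw [hS]; exact ((S.finite_toSet.image toR).isCompact_convexHull (𝕜 := ℝ)).isClosed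
  refine ⟨a, b, ?_, ha, hb, ?_⟩
  · rintro rfl
    obtain ⟨z, hz⟩ := hi
    refine not_interior_of_cr (sub_ne_zero.mpr (Ne.symm ha.1)) one_ne_zero hal ?_ hz
    have h1 := hal z (interior_subset hz)
    have h2 := hbr z (interior_subset hz)
    linarith
  · have anti : ∀ p q : ℝ × ℝ, cr p q = - cr q p := by intro p q; simp only [cr]; ring
    intro c hc
    rcases side_sign hconv hi hc with h | h
    · left
      refine extreme_collinear hv hc.2.2.1 ha.2.2.1 (Ne.symm hc.1) (Ne.symm ha.1) ?_
      have h1 := h a ha.2.2.1.1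
      have h2 := hal c hc.2.2.1.1
      have := anti (a - v) (c - v)
      linarith
    · right
      refine extreme_collinear hv hc.2.2.1 hb.2.2.1 (Ne.symm hc.1) (Ne.symm hb.1) ?_
      have h1 := h b hb.2.2.1.1
      have h2 := hbr c hc.2.2.1.1
      have := anti (b - v) (c - v)
      linarith

/-! ### Subdividing an arrangement of rays -/

theorem exists_chain (T : Finset ℝ) (h0 : (0 : ℝ) ∈ T) (hn : ∀ t ∈ T, 0 ≤ t) :
    ∃ (n : ℕ) (τ : ℕ → ℝ), StrictMono τ ∧ τ 0 = 0 ∧ ∀ t, t ∈ T ↔ ∃ j ≤ n, τ j = t := by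
  obtain ⟨n, hcard⟩ : ∃ n, T.card = n + 1 :=
    Nat.exists_eq_succ_of_ne_zero (Finset.card_ne_zero_of_mem h0)
  set f := T.orderEmbOfFin hcard with hf
  have hr : ∀ t, t ∈ T ↔ ∃ k, f k = t := by
    intro t
    have := T.range_orderEmbOfFin hcard
    rw [← Finset.mem_coe, ← this]; rfl
  refine ⟨n, fun j => if h : j < n + 1 then f ⟨j, h⟩ else f (Fin.last n) + (j - n), ?_, ?_, ?_⟩
  · refine strictMono_nat_of_lt_succ fun j => ?_
    by_cases h1 : j + 1 < n + 1
    · have h2 : j < n + 1 := by omega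
      simp only [h1, h2, dif_pos]
      exact f.strictMono (by simp [Fin.lt_def])
    · by_cases h2 : j < n + 1
      · have : j = n := by omega
        subst this
        simp [Fin.last]
      · simp only [h1, h2, dif_neg, not_false_eq_true]
        push_cast; linarith
  · simp only [Nat.succ_pos, dif_pos]
    obtain ⟨k, hk⟩ := (hr 0).mp h0
    have h1 : 0 ≤ f ⟨0, Nat.succ_pos n⟩ := hn _ ((hr _).mpr ⟨_, rfl⟩)
    have h2 : f ⟨0, Nat.succ_pos n⟩ ≤ f k := f.monotone (by simp)
    linarith
  · intro t
    rw [hr]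
    constructor
    · rintro ⟨k, rfl⟩
      exact ⟨k, by omega, dif_pos k.2⟩
    · rintro ⟨j, hj, h⟩
      have : j < n + 1 := by omega
      exact ⟨⟨j, this⟩, by simpa [this] using h⟩

/-- The point of parameter `t` on the ray `(b, l)`. -/
noncomputable def pt (r : (ℝ × ℝ) × (ℤ × ℤ)) (t : ℝ) : ℝ × ℝ := r.1 + t • toR r.2

theorem pt_zero (r) : pt r 0 = r.1 := by simp [pt]

theorem pt_inj {r : (ℝ × ℝ) × (ℤ × ℤ)} (h : Int.gcd r.2.1 r.2.2 = 1) {s t : ℝ}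
    (e : pt r s = pt r t) : s = t := by
  unfold pt at e
  exact smul_left_injective ℝ (toR_ne_zero h) (add_left_cancel e)

theorem pt_mem {r : (ℝ × ℝ) × (ℤ × ℤ)} {t : ℝ} (h : 0 ≤ t) : pt r t ∈ raySet r := ⟨t, h, rfl⟩

theorem prim_pt {r : (ℝ × ℝ) × (ℤ × ℤ)} (h : Int.gcd r.2.1 r.2.2 = 1) {s t : ℝ} (hst : s < t) :
    PrimOut (pt r t - pt r s) r.2 :=
  ⟨h, t - s, by linarith, by unfold pt; module⟩

theorem prim_pt_neg {r : (ℝ × ℝ) × (ℤ × ℤ)} (h : Int.gcd r.2.1 r.2.2 = 1) {s t : ℝ}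
    (hst : s < t) : PrimOut (pt r s - pt r t) (-r.2) :=
  ⟨by simpa using h, t - s, by linarith, by rw [toR_neg]; unfold pt; module⟩

theorem mem_seg_pt {r : (ℝ × ℝ) × (ℤ × ℤ)} {s t : ℝ} (hst : s ≤ t) {x : ℝ × ℝ} :
    x ∈ seg (pt r s, pt r t) → ∃ u, s ≤ u ∧ u ≤ t ∧ x = pt r u := by
  rintro ⟨a, b, ha, hb, hab, rfl⟩
  refine ⟨a * s + b * t, ?_, ?_, ?_⟩
  · have : a = 1 - b := by linarith
    subst this; nlinarith
  · have : b = 1 - a := by linarith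
    subst this; nlinarith
  · have : a = 1 - b := by linarith
    subst this; unfold pt; module

theorem exists_subdivision {ι : Type*} (R : Finset ι) (r : ι → (ℝ × ℝ) × (ℤ × ℤ))
    (hl : ∀ i ∈ R, Int.gcd (r i).2.1 (r i).2.2 = 1)
    (hInt : ∀ i ∈ R, ∀ j ∈ R, i ≠ j → (raySet (r i) ∩ raySet (r j)).Subsingleton) :
    ∃ (n : ι → ℕ) (τ : ι → ℕ → ℝ), (∀ i ∈ R, StrictMono (τ i)) ∧ (∀ i ∈ R, τ i 0 = 0) ∧
      ∀ i ∈ R, ∀ j ∈ R, i ≠ j → ∀ u, 0 ≤ u → pt (r i) u ∈ raySet (r j) →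
        ∃ k ≤ n i, τ i k = u := by
  have key : ∀ i, ∃ (n : ℕ) (τ : ℕ → ℝ), i ∈ R → StrictMono τ ∧ τ 0 = 0 ∧
      ∀ j ∈ R, i ≠ j → ∀ u, 0 ≤ u → pt (r i) u ∈ raySet (r j) → ∃ k ≤ n, τ k = u := by
    intro i
    by_cases hi : i ∈ R
    swap
    · exact ⟨0, fun _ => 0, fun h => absurd h hi⟩
    set U : Set ℝ := ⋃ j ∈ (R : Set ι), {u : ℝ | i ≠ j ∧ 0 ≤ u ∧ pt (r i) u ∈ raySet (r j)} with hU
    have hfin : U.Finite := by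
      refine R.finite_toSet.biUnion fun j hj => Set.Subsingleton.finite ?_
      rintro u ⟨hij, hu, hu'⟩ w ⟨_, hw, hw'⟩
      exact pt_inj (hl i hi) (hInt i hi j hj hij ⟨pt_mem hu, hu'⟩ ⟨pt_mem hw, hw'⟩)
    obtain ⟨n, τ, h1, h2, h3⟩ := exists_chain (insert 0 hfin.toFinset) (by simp) (by
      intro t ht
      rw [Finset.mem_insert, Set.Finite.mem_toFinset] at ht
      rcases ht with rfl | ht
      · exact le_rfl
      · rw [hU, Set.mem_iUnion₂] at ht
        obtain ⟨j, _, _, h, _⟩ := ht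
        exact h)
    refine ⟨n, τ, fun _ => ⟨h1, h2, ?_⟩⟩
    intro j hj hij u hu hu'
    refine (h3 u).mp ?_
    rw [Finset.mem_insert, Set.Finite.mem_toFinset, hU, Set.mem_iUnion₂]
    exact Or.inr ⟨j, hj, hij, hu, hu'⟩
  choose n τ h using key
  exact ⟨n, τ, fun i hi => (h i hi).1, fun i hi => (h i hi).2.1, fun i hi => (h i hi).2.2⟩

section Arrangement

variable {ι : Type*}

/-- The cell `k` of the subdivided ray: a segment if `k < n`, the final ray if `k = n`. -/
def cell (r : (ℝ × ℝ) × (ℤ × ℤ)) (n : ℕ) (τ : ℕ → ℝ) (k : ℕ) : Set (ℝ × ℝ) :=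
  {x | ∃ u, τ k ≤ u ∧ (k < n → u ≤ τ (k + 1)) ∧ x = pt r u}

/-- End points of a cell. -/
def cellEnd (r : (ℝ × ℝ) × (ℤ × ℤ)) (n : ℕ) (τ : ℕ → ℝ) (k : ℕ) : Set (ℝ × ℝ) :=
  {x | x = pt r (τ k) ∨ (k < n ∧ x = pt r (τ (k + 1)))}

theorem cell_inter {R : Finset ι} {r : ι → (ℝ × ℝ) × (ℤ × ℤ)} {n : ι → ℕ} {τ : ι → ℕ → ℝ}
    (hl : ∀ i ∈ R, Int.gcd (r i).2.1 (r i).2.2 = 1)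
    (hτ : ∀ i ∈ R, StrictMono (τ i)) (hτ0 : ∀ i ∈ R, τ i 0 = 0)
    (hx : ∀ i ∈ R, ∀ j ∈ R, i ≠ j → ∀ u, 0 ≤ u → pt (r i) u ∈ raySet (r j) →
        ∃ k ≤ n i, τ i k = u)
    {i j : ι} (hi : i ∈ R) (hj : j ∈ R) {k k' : ℕ} (hk : k ≤ n i) (hk' : k' ≤ n j)
    (hne : ¬ (i = j ∧ k = k')) {x : ℝ × ℝ}
    (h1 : x ∈ cell (r i) (n i) (τ i) k) (h2 : x ∈ cell (r j) (n j) (τ j) k') :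
    x ∈ cellEnd (r i) (n i) (τ i) k := by
  obtain ⟨u, hu1, hu2, rfl⟩ := h1
  obtain ⟨u', hu1', hu2', e⟩ := h2
  have pos : ∀ i ∈ R, ∀ k, 0 ≤ τ i k := fun i hi k => by
    rw [← hτ0 i hi]; exact (hτ i hi).monotone (Nat.zero_le k)
  by_cases hij : i = j
  · subst hij
    have := pt_inj (hl i hi) e
    subst this
    rcases lt_trichotomy k k' with h | h | h
    · have hkn : k < n i := by omega
      right
      refine ⟨hkn, ?_⟩
      have : τ i (k + 1) ≤ τ i k' := (hτ i hi).monotone h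
      have := hu2 hkn
      congr 1; linarith
    · exact absurd ⟨rfl, h⟩ hne
    · have hkn : k' < n i := by omega
      left
      have : τ i (k' + 1) ≤ τ i k := (hτ i hi).monotone h
      have := hu2' hkn
      congr 1; linarith
  · obtain ⟨q, hq, rfl⟩ := hx i hi j hj hij u (le_trans (pos i hi k) hu1)
      (by rw [e]; exact pt_mem (le_trans (pos j hj k') hu1'))
    have hkq : k ≤ q := (hτ i hi).le_iff_le.mp hu1
    by_cases hkn : k < n i
    · have : q ≤ k + 1 := (hτ i hi).le_iff_le.mp (hu2 hkn)
      have : q = k ∨ q = k + 1 := by omega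
      rcases this with rfl | rfl
      · left; rfl
      · right; exact ⟨hkn, rfl⟩
    · have : q = k := by omega
      subst this; left; rfl

/-- The segment number `p.2` of the ray number `p.1`. -/
noncomputable def segf (r : ι → (ℝ × ℝ) × (ℤ × ℤ)) (τ : ι → ℕ → ℝ) (p : (_ : ι) × ℕ) : Seg :=
  (pt (r p.1) (τ p.1 p.2), pt (r p.1) (τ p.1 (p.2 + 1)))

/-- The final ray of the ray number `i`. -/
noncomputable def rayf (r : ι → (ℝ × ℝ) × (ℤ × ℤ)) (n : ι → ℕ) (τ : ι → ℕ → ℝ) (i : ι) :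
    (ℝ × ℝ) × (ℤ × ℤ) :=
  (pt (r i) (τ i (n i)), (r i).2)

open Classical in
theorem arrangement_balance {R : Finset ι} {r : ι → (ℝ × ℝ) × (ℤ × ℤ)} {n : ι → ℕ}
    {τ : ι → ℕ → ℝ}
    (hl : ∀ i ∈ R, Int.gcd (r i).2.1 (r i).2.2 = 1)
    (hτ : ∀ i ∈ R, StrictMono (τ i)) (hτ0 : ∀ i ∈ R, τ i 0 = 0)
    (hinj : Set.InjOn (segf r τ) (R.sigma fun i => Finset.range (n i) : Finset ((_ : ι) × ℕ)))
    (hinj' : Set.InjOn (rayf r n τ) R)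
    (w : ι → ℕ) (ms : Seg → ℕ) (mr : (ℝ × ℝ) × (ℤ × ℤ) → ℕ)
    (hms : ∀ i ∈ R, ∀ k < n i, ms (segf r τ ⟨i, k⟩) = w i)
    (hmr : ∀ i ∈ R, mr (rayf r n τ i) = w i) (v : ℝ × ℝ) :
    balSum ((R.sigma fun i => Finset.range (n i)).image (segf r τ)) ms v +
      ∑ q ∈ (R.image (rayf r n τ)).filter (fun q => q.1 = v), (mr q : ℤ) • q.2 =
    ∑ i ∈ R.filter (fun i => (r i).1 = v), (w i : ℤ) • (r i).2 := by
  unfold balSum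
  rw [Finset.sum_filter, Finset.sum_filter, Finset.sum_filter, Finset.sum_image hinj,
    Finset.sum_image hinj', Finset.sum_sigma, ← Finset.sum_add_distrib]
  refine Finset.sum_congr rfl fun i hi => ?_
  set G : ℕ → ℤ × ℤ := fun k => if pt (r i) (τ i k) = v then (w i : ℤ) • (r i).2 else 0 with hG
  have h1 : ∀ k ∈ Finset.range (n i),
      (if (segf r τ ⟨i, k⟩).1 = v ∨ (segf r τ ⟨i, k⟩).2 = v then
        (ms (segf r τ ⟨i, k⟩) : ℤ) • outDir v (segf r τ ⟨i, k⟩) else 0) = G k - G (k + 1) := by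
    intro k hk
    rw [hms i hi k (Finset.mem_range.mp hk)]
    have hlt : τ i k < τ i (k + 1) := hτ i hi (Nat.lt_succ_self k)
    have hne : pt (r i) (τ i k) ≠ pt (r i) (τ i (k + 1)) :=
      fun e => hlt.ne (pt_inj (hl i hi) e)
    simp only [hG]
    by_cases c1 : pt (r i) (τ i k) = v
    · have c2 : pt (r i) (τ i (k + 1)) ≠ v := fun e => hne (c1.trans e.symm)
      have ho : outDir v (segf r τ ⟨i, k⟩) = (r i).2 := by
        unfold outDir
        rw [if_pos (show (segf r τ ⟨i, k⟩).1 = v from c1)]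
        exact prim_eq (prim_pt (hl i hi) hlt)
      rw [if_pos (show (segf r τ ⟨i, k⟩).1 = v ∨ (segf r τ ⟨i, k⟩).2 = v from Or.inl c1),
        if_pos c1, if_neg c2, ho, sub_zero]
    · by_cases c2 : pt (r i) (τ i (k + 1)) = v
      · have ho : outDir v (segf r τ ⟨i, k⟩) = - (r i).2 := by
          unfold outDir
          rw [if_neg (show ¬ (segf r τ ⟨i, k⟩).1 = v from c1)]
          exact prim_eq (prim_pt_neg (hl i hi) hlt)
        rw [if_pos (show (segf r τ ⟨i, k⟩).1 = v ∨ (segf r τ ⟨i, k⟩).2 = v from Or.inr c2),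
          if_neg c1, if_pos c2, ho, smul_neg, zero_sub]
      · rw [if_neg (show ¬ ((segf r τ ⟨i, k⟩).1 = v ∨ (segf r τ ⟨i, k⟩).2 = v) from
          fun h => h.elim c1 c2), if_neg c1, if_neg c2, sub_zero]
  rw [Finset.sum_congr rfl h1, Finset.sum_range_sub']
  have h2 : (if (rayf r n τ i).1 = v then (mr (rayf r n τ i) : ℤ) • (rayf r n τ i).2 else 0)
      = G (n i) := by
    rw [hmr i hi]; rfl
  rw [h2, sub_add_cancel, hG]
  simp only [hτ0 i hi, pt_zero]

end Arrangement

/-! ### The rays extending the sides of the polygon -/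

/-- The ray extending the side `[v, a]` beyond `v`, for `p = (v, a)`. -/
noncomputable def sideRay (p : Seg) : (ℝ × ℝ) × (ℤ × ℤ) := (p.1, - prim (p.2 - p.1))

theorem side_rat {Ω : Set (ℝ × ℝ)} (hΩ : IsLatticePolygon Ω) {v a : ℝ × ℝ}
    (h : IsSide Ω v a) : RatDir (a - v) := by
  obtain ⟨⟨S, hS⟩, -⟩ := hΩ
  obtain ⟨hne, hv, ha, -⟩ := h
  rw [hS] at hv ha
  obtain ⟨z, -, rfl⟩ := extremePoints_convexHull_subset hv
  obtain ⟨y, -, rfl⟩ := extremePoints_convexHull_subset ha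
  have e : toR y - toR z = toR (y - z) := by simp [toR]
  rw [e]
  refine ratDir_of_int (sub_ne_zero.mpr ?_)
  rintro rfl; exact hne rfl

theorem sideRay_gcd {Ω : Set (ℝ × ℝ)} (hΩ : IsLatticePolygon Ω) {p : Seg}
    (h : IsSide Ω p.1 p.2) : Int.gcd (sideRay p).2.1 (sideRay p).2.2 = 1 := by
  simpa [sideRay] using (prim_spec (side_rat hΩ h)).1

theorem sideRay_pt {Ω : Set (ℝ × ℝ)} (hΩ : IsLatticePolygon Ω) {p : Seg}
    (h : IsSide Ω p.1 p.2) : ∃ κ : ℝ, 0 < κ ∧ ∀ t, pt (sideRay p) t = p.1 + (κ * t) • (p.1 - p.2) := by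
  obtain ⟨-, c, hc, e⟩ := prim_spec (side_rat hΩ h)
  refine ⟨c⁻¹, by positivity, fun t => ?_⟩
  have e' : p.1 - p.2 = - (c • toR (prim (p.2 - p.1))) := by rw [← e]; abel
  rw [e', pt]
  simp only [sideRay, toR_neg]
  rw [smul_neg, smul_neg, smul_smul]
  congr 3
  field_simp

theorem sideRay_inter_Ω {Ω : Set (ℝ × ℝ)} (hΩ : IsLatticePolygon Ω) {p : Seg}
    (h : IsSide Ω p.1 p.2) {u : ℝ} (hu : 0 ≤ u) (hx : pt (sideRay p) u ∈ Ω) : u = 0 := by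
  obtain ⟨κ, hκ, e⟩ := sideRay_pt hΩ h
  by_contra hne
  have hup : 0 < u := lt_of_le_of_ne hu (Ne.symm hne)
  rw [e] at hx
  exact extreme_not_between h.2.1 h.2.2.1.1 (Ne.symm h.1) (by positivity) hx

theorem sideRay_inter {Ω : Set (ℝ × ℝ)} (hΩ : IsLatticePolygon Ω) {p q : Seg}
    (hp : IsSide Ω p.1 p.2) (hq : IsSide Ω q.1 q.2) (hpq : p ≠ q) :
    (raySet (sideRay p) ∩ raySet (sideRay q)).Subsingleton := by
  obtain ⟨κ, hκ, e⟩ := sideRay_pt hΩ hp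
  obtain ⟨κ', hκ', e'⟩ := sideRay_pt hΩ hq
  rintro x ⟨⟨s, hs, hxs⟩, ⟨s', hs', hxs'⟩⟩ y ⟨⟨t, ht, hyt⟩, ⟨t', ht', hyt'⟩⟩
  by_contra hxy
  have x1 : x = p.1 + (κ * s) • (p.1 - p.2) := by rw [← e]; exact hxs
  have x2 : x = q.1 + (κ' * s') • (q.1 - q.2) := by rw [← e']; exact hxs'
  have y1 : y = p.1 + (κ * t) • (p.1 - p.2) := by rw [← e]; exact hyt
  have y2 : y = q.1 + (κ' * t') • (q.1 - q.2) := by rw [← e']; exact hyt'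
  obtain ⟨v, a⟩ := p
  obtain ⟨v', a'⟩ := q
  simp only at *
  set A := κ * s
  set B := κ * t
  set A' := κ' * s'
  set B' := κ' * t'
  have hBA : B' - A' ≠ 0 := by
    intro h0
    apply hxy
    have : A' = B' := by linarith
    rw [x2, y2, this]
  -- direction of the second ray is a multiple of that of the first
  have hd : (B' - A') • (v' - a') = (B - A) • (v - a) := by
    have h1 : y - x = (B - A) • (v - a) := by rw [x1, y1]; module
    have h2 : y - x = (B' - A') • (v' - a') := by rw [x2, y2]; module
    rw [← h1, ← h2]
  obtain ⟨c, hc⟩ : ∃ c : ℝ, v' - a' = c • (v - a) := by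
    refine ⟨(B' - A')⁻¹ * (B - A), ?_⟩
    rw [mul_smul, ← hd, smul_smul, inv_mul_cancel₀ hBA, one_smul]
  have hv' : v' - v = (A' * c - A) • (a - v) := by
    have h1 : v' = x - A' • (v' - a') := by rw [x2]; abel
    rw [hc, x1] at h1
    rw [h1]; module
  have ha' : a' - v = (c + A' * c - A) • (a - v) := by
    have h1 : a' - v = (v' - v) - (v' - a') := by abel
    rw [h1, hv', hc]; module
  have cr0 : ∀ (k : ℝ) (z : ℝ × ℝ), cr z (k • z) = 0 := by
    intro k z; simp only [cr, Prod.smul_fst, Prod.smul_snd, smul_eq_mul]; ring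
  have hav : a ≠ v := Ne.symm hp.1
  have hv'c : v' = v ∨ v' = a := by
    by_cases h : v' = v
    · exact Or.inl h
    · right; symm
      exact extreme_collinear hp.2.1 hp.2.2.1 hq.2.1 hav h (by rw [hv']; exact cr0 _ _)
  have ha'c : a' = v ∨ a' = a := by
    by_cases h : a' = v
    · exact Or.inl h
    · right; symm
      exact extreme_collinear hp.2.1 hp.2.2.1 hq.2.2.1 hav h (by rw [ha']; exact cr0 _ _)
  have hva' : v' ≠ a' := hq.1
  rcases hv'c with h1 | h1 <;> rcases ha'c with h2 | h2
  · exact hva' (h1.trans h2.symm)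
  · exact hpq (by rw [h1, h2])
  · subst h1 h2
    have h3 : (1 + A + A') • (v' - a') = 0 := by
      have : a' + A • (a' - v') = v' + A' • (v' - a') := by rw [← x1, ← x2]
      have h4 : (v' + A' • (v' - a')) - (a' + A • (a' - v')) = 0 := by rw [this, sub_self]
      rw [← h4]; module
    have hA : 0 ≤ A := by positivity
    have hA' : 0 ≤ A' := by positivity
    rcases smul_eq_zero.mp h3 with h | h
    · linarith
    · exact hav (sub_eq_zero.mp h)
  · exact hva' (h1.trans h2.symm)

/-- Every `Ω`-tropical curve is the intersection of `Ω` with a plane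
tropical curve: there is a plane tropical curve `C'` whose support meets `Ω` exactly in
the support of `C`, each edge of `C` lying inside an edge of `C'` of the same weight. -/
theorem statement7 (Ω : Set (ℝ × ℝ)) (hΩ : IsLatticePolygon Ω)
    (E : Finset Seg) (m : Seg → ℕ) (hE : OmegaTropCurve Ω E m) :
    ∃ C : PlaneTropData, ExtendsCurve Ω E m C := by
  classical
  obtain ⟨hES, hPl, hm, hrat, hsub, hfr, hbal, d, hd, hob, -⟩ := hE
  have hΩc : IsCompact Ω := by
    obtain ⟨⟨S, hS⟩, -⟩ := hΩ
    rw [hS]; exact (S.finite_toSet.image toR).isCompact_convexHull (𝕜 := ℝ)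
  have hXfin : (Set.extremePoints ℝ Ω).Finite := by
    obtain ⟨⟨S, hS⟩, -⟩ := hΩ
    rw [hS]; exact (S.finite_toSet.image toR).subset extremePoints_convexHull_subset
  have hRfin : {p : Seg | IsSide Ω p.1 p.2}.Finite :=
    (hXfin.prod hXfin).subset fun p hp => ⟨hp.2.1, hp.2.2.1⟩
  set R : Finset Seg := hRfin.toFinset with hRdef
  have hR : ∀ p, p ∈ R ↔ IsSide Ω p.1 p.2 := by intro p; rw [hRdef]; simp
  have hl : ∀ i ∈ R, Int.gcd (sideRay i).2.1 (sideRay i).2.2 = 1 :=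
    fun i hi => sideRay_gcd hΩ ((hR i).mp hi)
  have hInt : ∀ i ∈ R, ∀ j ∈ R, i ≠ j → (raySet (sideRay i) ∩ raySet (sideRay j)).Subsingleton :=
    fun i hi j hj hij => sideRay_inter hΩ ((hR i).mp hi) ((hR j).mp hj) hij
  obtain ⟨n, τ, hτ, hτ0, hx⟩ := exists_subdivision R sideRay hl hInt
  have hpos : ∀ i ∈ R, ∀ k, 0 ≤ τ i k := fun i hi k => by
    rw [← hτ0 i hi]; exact (hτ i hi).monotone (Nat.zero_le k)
  have hlt : ∀ i ∈ R, ∀ k, τ i k < τ i (k + 1) := fun i hi k => hτ i hi (Nat.lt_succ_self k)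
  have huniq : ∀ i ∈ R, ∀ j ∈ R, ∀ s t, 0 ≤ s → s < t → pt (sideRay i) s ∈ raySet (sideRay j) →
      pt (sideRay i) t ∈ raySet (sideRay j) → i = j := by
    intro i hi j hj s t hs hst h1 h2
    by_contra hij
    exact hst.ne (pt_inj (hl i hi)
      (hInt i hi j hj hij ⟨pt_mem hs, h1⟩ ⟨pt_mem (hs.trans hst.le), h2⟩))
  set I : Finset ((_ : Seg) × ℕ) := R.sigma fun i => Finset.range (n i) with hI
  have hImem : ∀ p : (_ : Seg) × ℕ, p ∈ I ↔ p.1 ∈ R ∧ p.2 < n p.1 := by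
    intro p; rw [hI]; simp
  have hinj : Set.InjOn (segf sideRay τ) I := by
    rintro ⟨i, k⟩ hp ⟨j, k'⟩ hq e
    obtain ⟨hi, -⟩ := (hImem _).mp hp
    obtain ⟨hj, -⟩ := (hImem _).mp hq
    simp only at hi hj
    have e1 : pt (sideRay i) (τ i k) = pt (sideRay j) (τ j k') := congrArg Prod.fst e
    have e2 : pt (sideRay i) (τ i (k + 1)) = pt (sideRay j) (τ j (k' + 1)) := congrArg Prod.snd e
    have hij : i = j := huniq i hi j hj _ _ (hpos i hi k) (hlt i hi k)
      (e1 ▸ pt_mem (hpos j hj _)) (e2 ▸ pt_mem (hpos j hj _))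
    subst hij
    have := (hτ i hi).injective (pt_inj (hl i hi) e1)
    rw [this]
  have hinj' : Set.InjOn (rayf sideRay n τ) R := by
    intro i hi j hj e
    have e1 : pt (sideRay i) (τ i (n i)) = pt (sideRay j) (τ j (n j)) := congrArg Prod.fst e
    have e2 : (sideRay i).2 = (sideRay j).2 := by
      have h : (rayf sideRay n τ i).2 = (rayf sideRay n τ j).2 := congrArg Prod.snd e
      exact h
    have e3 : pt (sideRay i) (τ i (n i) + 1) = pt (sideRay j) (τ j (n j) + 1) := by
      unfold pt at *
      rw [add_smul, add_smul, ← add_assoc, ← add_assoc, e1, e2]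
    have h0 := hpos j hj (n j)
    exact huniq i hi j hj _ _ (hpos i hi _) (lt_add_one _)
      (e1 ▸ pt_mem h0) (e3 ▸ pt_mem (by linarith))
  set S : Finset Seg := I.image (segf sideRay τ) with hS
  set Q : Finset ((ℝ × ℝ) × (ℤ × ℤ)) := R.image (rayf sideRay n τ) with hQ
  have hSmem : ∀ e ∈ S, ∃ i ∈ R, ∃ k < n i, e = segf sideRay τ ⟨i, k⟩ := by
    intro e he
    rw [hS, Finset.mem_image] at he
    obtain ⟨⟨i, k⟩, hp, rfl⟩ := he
    obtain ⟨hi, hk⟩ := (hImem _).mp hp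
    exact ⟨i, hi, k, hk, rfl⟩
  have hQmem : ∀ q ∈ Q, ∃ i ∈ R, q = rayf sideRay n τ i := by
    intro q hq
    rw [hQ, Finset.mem_image] at hq
    obtain ⟨i, hi, rfl⟩ := hq
    exact ⟨i, hi, rfl⟩
  -- weights
  set w : Seg → ℕ := fun p => (d p).toNat with hw
  have hdpos : ∀ p ∈ R, 0 < d p := fun p hp => (hd p.1 p.2 ((hR p).mp hp)).1
  have hwd : ∀ p ∈ R, (w p : ℤ) = d p := fun p hp => Int.toNat_of_nonneg (hdpos p hp).le
  have hwpos : ∀ p ∈ R, 0 < w p := fun p hp => by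
    have := hwd p hp; have := hdpos p hp; omega
  obtain ⟨ms0, hms0⟩ : ∃ ms0 : Seg → ℕ, ∀ p ∈ I, ms0 (segf sideRay τ p) = w p.1 := by
    refine ⟨fun e => if h : ∃ p ∈ I, segf sideRay τ p = e then w h.choose.1 else 0, ?_⟩
    intro p hp
    have h : ∃ p' ∈ I, segf sideRay τ p' = segf sideRay τ p := ⟨p, hp, rfl⟩
    refine (dif_pos h).trans ?_
    rw [hinj h.choose_spec.1 hp h.choose_spec.2]
  obtain ⟨mr, hmr⟩ : ∃ mr : (ℝ × ℝ) × (ℤ × ℤ) → ℕ, ∀ i ∈ R, mr (rayf sideRay n τ i) = w i := by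
    refine ⟨fun q => if h : ∃ i ∈ R, rayf sideRay n τ i = q then w h.choose else 0, ?_⟩
    intro p hp
    have h : ∃ p' ∈ R, rayf sideRay n τ p' = rayf sideRay n τ p := ⟨p, hp, rfl⟩
    refine (dif_pos h).trans ?_
    rw [hinj' h.choose_spec.1 hp h.choose_spec.2]
  -- points of the curve E
  have hendΩ : ∀ e ∈ E, e.1 ∈ Ω ∧ e.2 ∈ Ω := by
    intro e he
    have hs : seg e ⊆ Ω := fun x hx => hsub (Set.mem_biUnion he hx)
    exact ⟨hs (left_mem_segment ℝ _ _), hs (right_mem_segment ℝ _ _)⟩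
  have hout : ∀ i ∈ R, ∀ k, pt (sideRay i) (τ i (k + 1)) ∉ Ω := by
    intro i hi k h
    have h1 := sideRay_inter_Ω hΩ ((hR i).mp hi) (hpos i hi _) h
    have := hlt i hi k
    have := hpos i hi k
    linarith
  have hSE : ∀ e ∈ S, e ∉ E ∧ (e.2, e.1) ∉ E := by
    intro e he
    obtain ⟨i, hi, k, hk, rfl⟩ := hSmem e he
    exact ⟨fun h => hout i hi k (hendΩ _ h).2, fun h => hout i hi k (hendΩ _ h).1⟩
  set ms : Seg → ℕ := fun e => if e ∈ E then m e else ms0 e with hms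
  have hmsE : ∀ e ∈ E, ms e = m e := fun e he => if_pos he
  have hmsS : ∀ i ∈ R, ∀ k < n i, ms (segf sideRay τ ⟨i, k⟩) = w i := by
    intro i hi k hk
    have hI' : (⟨i, k⟩ : (_ : Seg) × ℕ) ∈ I := (hImem _).mpr ⟨hi, hk⟩
    have hS' : segf sideRay τ ⟨i, k⟩ ∈ S := Finset.mem_image_of_mem _ hI'
    rw [hms]
    simp only
    rw [if_neg (hSE _ hS').1]
    exact hms0 _ hI'
  -- cells
  have hsegcell : ∀ i ∈ R, ∀ k < n i,
      seg (segf sideRay τ ⟨i, k⟩) ⊆ cell (sideRay i) (n i) (τ i) k := by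
    intro i hi k hk x hx
    obtain ⟨u, h1, h2, h3⟩ := mem_seg_pt (hlt i hi k).le hx
    exact ⟨u, h1, fun _ => h2, h3⟩
  have hraycell : ∀ i ∈ R,
      raySet (rayf sideRay n τ i) ⊆ cell (sideRay i) (n i) (τ i) (n i) := by
    rintro i hi x ⟨t, ht, rfl⟩
    refine ⟨τ i (n i) + t, by linarith, fun h => absurd h (lt_irrefl _), ?_⟩
    simp only [rayf, pt, add_smul, add_assoc]
  have hsegend : ∀ i ∈ R, ∀ k, cellEnd (sideRay i) (n i) (τ i) k ⊆
      {(segf sideRay τ ⟨i, k⟩).1, (segf sideRay τ ⟨i, k⟩).2} := by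
    rintro i hi k x (h | ⟨-, h⟩)
    · exact Or.inl h
    · exact Or.inr h
  have hrayend : ∀ i ∈ R, cellEnd (sideRay i) (n i) (τ i) (n i) ⊆
      {(rayf sideRay n τ i).1} := by
    rintro i hi x (h | ⟨h, -⟩)
    · exact h
    · exact absurd h (lt_irrefl _)
  have hinter := fun {i j : Seg} (hi : i ∈ R) (hj : j ∈ R) {k k' : ℕ} (hk : k ≤ n i)
    (hk' : k' ≤ n j) (hne : ¬ (i = j ∧ k = k')) {x : ℝ × ℝ} =>
    cell_inter hl hτ hτ0 hx hi hj hk hk' hne (x := x)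
  -- a cell meets Ω only in a vertex
  have hcellΩ : ∀ i ∈ R, ∀ k, ∀ x ∈ cell (sideRay i) (n i) (τ i) k, x ∈ Ω →
      x = pt (sideRay i) (τ i k) ∧ x ∈ Set.extremePoints ℝ Ω := by
    rintro i hi k x ⟨u, h1, -, rfl⟩ hxΩ
    have hu0 := sideRay_inter_Ω hΩ ((hR i).mp hi) ((hpos i hi k).trans h1) hxΩ
    have := hpos i hi k
    have hk0 : τ i k = u := by linarith
    refine ⟨by rw [hk0], ?_⟩
    rw [hu0, pt_zero]
    exact ((hR i).mp hi).2.1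
  have hEend : ∀ e ∈ E, ∀ x ∈ seg e, x ∈ Set.extremePoints ℝ Ω → x = e.1 ∨ x = e.2 := by
    intro e he x hxe hxX
    by_contra hcon
    push Not at hcon
    have hop := mem_openSegment_of_ne_left_right (Ne.symm hcon.1) (Ne.symm hcon.2) hxe
    exact hcon.1 ((mem_extremePoints.mp hxX).2 _ (hendΩ e he).1 _ (hendΩ e he).2 hop).1.symm
  have hEcell : ∀ e ∈ E, ∀ i ∈ R, ∀ k, ∀ x ∈ seg e, x ∈ cell (sideRay i) (n i) (τ i) k →
      (x = e.1 ∨ x = e.2) ∧ x = pt (sideRay i) (τ i k) := by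
    intro e he i hi k x hxe hxc
    obtain ⟨h1, h2⟩ := hcellΩ i hi k x hxc (hsub (Set.mem_biUnion he hxe))
    exact ⟨hEend e he x hxe h2, h1⟩
  -- the balance of E
  have hXg : ∀ v ∈ Set.extremePoints ℝ Ω, v ∈ gsupp E := fun v hv => by
    rw [← hfr] at hv; exact hv.1
  have hEbal : ∀ v, balSum E m v +
      ∑ i ∈ R.filter (fun i => (sideRay i).1 = v), (w i : ℤ) • (sideRay i).2 = 0 := by
    intro v
    by_cases hv : v ∈ Set.extremePoints ℝ Ω
    · obtain ⟨a, b, hab, ha, hb, hall⟩ := two_sides hΩ hv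
      have hfil : R.filter (fun i => (sideRay i).1 = v) = {(v, a), (v, b)} := by
        ext ⟨x, y⟩
        rw [Finset.mem_filter, hR, Finset.mem_insert, Finset.mem_singleton]
        simp only [sideRay, Prod.mk.injEq]
        constructor
        · rintro ⟨h, rfl⟩
          rcases hall y h with rfl | rfl
          · exact Or.inl ⟨rfl, rfl⟩
          · exact Or.inr ⟨rfl, rfl⟩
        · rintro (⟨rfl, rfl⟩ | ⟨rfl, rfl⟩)
          · exact ⟨ha, rfl⟩
          · exact ⟨hb, rfl⟩
      rw [hfil, Finset.sum_pair (by simp [hab]), hwd _ ((hR (v, a)).mpr ha),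
        hwd _ ((hR (v, b)).mpr hb), hob v hv a b hab ha hb]
      simp only [sideRay, smul_neg]
      abel
    · have hfil : R.filter (fun i => (sideRay i).1 = v) = ∅ := by
        rw [Finset.filter_eq_empty_iff]
        intro i hi h
        exact hv (h ▸ ((hR i).mp hi).2.1)
      rw [hfil, Finset.sum_empty, add_zero]
      by_cases hvE : IsVert E v
      · refine hbal v hvE ?_
        obtain ⟨e, he, hev⟩ := hvE
        have hvs : v ∈ seg e := by
          rcases hev with rfl | rfl
          · exact left_mem_segment ℝ _ _
          · exact right_mem_segment ℝ _ _
        have hvg : v ∈ gsupp E := Set.mem_biUnion he hvs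
        by_contra hni
        apply hv
        rw [← hfr]
        exact ⟨hvg, by rw [hΩc.isClosed.frontier_eq]; exact ⟨hsub hvg, hni⟩⟩
      · unfold balSum
        rw [Finset.filter_eq_empty_iff.mpr, Finset.sum_empty]
        intro e he h
        exact hvE ⟨e, he, h⟩
  refine ⟨⟨E ∪ S, Q, ms, mr⟩, ⟨?_, ?_, ?_, ?_, ?_, ?_, ?_⟩, ?_, ?_⟩
  · -- EdgeSet
    intro e he
    rcases Finset.mem_union.mp he with he | he
    · refine ⟨(hES e he).1, fun h => ?_⟩
      rcases Finset.mem_union.mp h with h | h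
      · exact (hES e he).2 h
      · exact (hSE _ h).2 he
    · refine ⟨?_, fun h => ?_⟩
      · obtain ⟨i, hi, k, hk, rfl⟩ := hSmem e he
        exact fun h => (hlt i hi k).ne (pt_inj (hl i hi) h)
      · rcases Finset.mem_union.mp h with h | h
        · exact (hSE _ he).2 h
        · obtain ⟨i, hi, k, hk, rfl⟩ := hSmem e he
          obtain ⟨j, hj, k', hk', e⟩ := hSmem _ h
          have e1 : pt (sideRay i) (τ i (k + 1)) = pt (sideRay j) (τ j k') := congrArg Prod.fst e
          have e2 : pt (sideRay i) (τ i k) = pt (sideRay j) (τ j (k' + 1)) := congrArg Prod.snd e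
          have hij : i = j := huniq i hi j hj _ _ (hpos i hi k) (hlt i hi k)
            (e2 ▸ pt_mem (hpos j hj _)) (e1 ▸ pt_mem (hpos j hj _))
          subst hij
          have h1 := (hτ i hi).injective (pt_inj (hl i hi) e1)
          have h2 := (hτ i hi).injective (pt_inj (hl i hi) e2)
          omega
  · intro e he
    rcases Finset.mem_union.mp he with he | he
    · exact ⟨by simp only; rw [hmsE e he]; exact hm e he, hrat e he⟩
    · obtain ⟨i, hi, k, hk, rfl⟩ := hSmem e he
      exact ⟨by simp only; rw [hmsS i hi k hk]; exact hwpos i hi,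
        ⟨_, prim_pt (hl i hi) (hlt i hi k)⟩⟩
  · intro q hq
    obtain ⟨i, hi, rfl⟩ := hQmem q hq
    exact ⟨by simp only; rw [hmr i hi]; exact hwpos i hi, hl i hi⟩
  · rintro e he e' he' hne x ⟨hxe, hxe'⟩
    rcases Finset.mem_union.mp he with he | he <;> rcases Finset.mem_union.mp he' with he' | he'
    · exact hPl e he e' he' hne ⟨hxe, hxe'⟩
    · obtain ⟨i, hi, k, hk, rfl⟩ := hSmem e' he'
      obtain ⟨h1, h2⟩ := hEcell e he i hi k x hxe (hsegcell i hi k hk hxe')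
      exact ⟨h1, Or.inl h2⟩
    · obtain ⟨i, hi, k, hk, rfl⟩ := hSmem e he
      obtain ⟨h1, h2⟩ := hEcell e' he' i hi k x hxe' (hsegcell i hi k hk hxe)
      exact ⟨Or.inl h2, h1⟩
    · obtain ⟨i, hi, k, hk, rfl⟩ := hSmem e he
      obtain ⟨j, hj, k', hk', rfl⟩ := hSmem e' he'
      have c1 := hsegcell i hi k hk hxe
      have c2 := hsegcell j hj k' hk' hxe'
      have hn1 : ¬ (i = j ∧ k = k') := by rintro ⟨rfl, rfl⟩; exact hne rfl
      have hn2 : ¬ (j = i ∧ k' = k) := by rintro ⟨rfl, rfl⟩; exact hne rfl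
      exact ⟨hsegend i hi k (hinter hi hj hk.le hk'.le hn1 c1 c2),
        hsegend j hj k' (hinter hj hi hk'.le hk.le hn2 c2 c1)⟩
  · rintro e he q hq x ⟨hxe, hxq⟩
    obtain ⟨j, hj, rfl⟩ := hQmem q hq
    have c2 := hraycell j hj hxq
    rcases Finset.mem_union.mp he with he | he
    · obtain ⟨h1, h2⟩ := hEcell e he j hj _ x hxe c2
      exact ⟨h1, h2⟩
    · obtain ⟨i, hi, k, hk, rfl⟩ := hSmem e he
      have c1 := hsegcell i hi k hk hxe
      have hn1 : ¬ (i = j ∧ k = n j) := by rintro ⟨rfl, rfl⟩; exact lt_irrefl _ hk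
      have hn2 : ¬ (j = i ∧ n j = k) := by rintro ⟨rfl, rfl⟩; exact lt_irrefl _ hk
      exact ⟨hsegend i hi k (hinter hi hj hk.le le_rfl hn1 c1 c2),
        hrayend j hj (hinter hj hi le_rfl hk.le hn2 c2 c1)⟩
  · rintro q hq q' hq' hne x ⟨hxq, hxq'⟩
    obtain ⟨i, hi, rfl⟩ := hQmem q hq
    obtain ⟨j, hj, rfl⟩ := hQmem q' hq'
    have c1 := hraycell i hi hxq
    have c2 := hraycell j hj hxq'
    have hn1 : ¬ (i = j ∧ n i = n j) := by rintro ⟨rfl, -⟩; exact hne rfl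
    have hn2 : ¬ (j = i ∧ n j = n i) := by rintro ⟨rfl, -⟩; exact hne rfl
    exact ⟨hrayend i hi (hinter hi hj le_rfl le_rfl hn1 c1 c2),
      hrayend j hj (hinter hj hi le_rfl le_rfl hn2 c2 c1)⟩
  · intro v _
    have hdisj : Disjoint E S := by
      rw [Finset.disjoint_left]; exact fun e he he' => (hSE e he').1 he
    have hsplit : balSum (E ∪ S) ms v = balSum E m v + balSum S ms v := by
      unfold balSum
      rw [Finset.filter_union, Finset.sum_union (Finset.disjoint_filter_filter hdisj)]
      congr 1
      refine Finset.sum_congr rfl fun e he => ?_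
      rw [hmsE e (Finset.mem_filter.mp he).1]
    have harr := arrangement_balance hl hτ hτ0 hinj hinj' w ms mr hmsS hmr v
    unfold ptcBalSum
    simp only
    rw [hsplit, add_assoc, ← hEbal v]
    congr 1
  · -- support
    ext x
    constructor
    · rintro ⟨hxs, hxΩ⟩
      rcases hxs with hxs | hxs
      · rw [Set.mem_iUnion₂] at hxs
        obtain ⟨e, he, hxe⟩ := hxs
        rcases Finset.mem_union.mp he with he | he
        · exact Set.mem_biUnion he hxe
        · obtain ⟨i, hi, k, hk, rfl⟩ := hSmem e he
          exact hXg x (hcellΩ i hi k x (hsegcell i hi k hk hxe) hxΩ).2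
      · rw [Set.mem_iUnion₂] at hxs
        obtain ⟨q, hq, hxq⟩ := hxs
        obtain ⟨i, hi, rfl⟩ := hQmem q hq
        exact hXg x (hcellΩ i hi _ x (hraycell i hi hxq) hxΩ).2
    · intro hxg
      refine ⟨Or.inl ?_, hsub hxg⟩
      unfold gsupp at hxg
      rw [Set.mem_iUnion₂] at hxg
      obtain ⟨e, he, hxe⟩ := hxg
      exact Set.mem_biUnion (Finset.mem_union_left S he) hxe
  · intro e he
    exact Or.inl ⟨e, Finset.mem_union_left S he, Set.Subset.rfl, hmsE e he⟩
end
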